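/- For every CLL formula A and names z, w, s, there exists a CP+Mix0 process Sync^A_{z,w} (the synchronizer for A) with a typing derivation Sync^A_{z,w} ⊢ z:(A^⊥L)^⊥⊗⊥, w:((A^⊥)^⊥L)^⊥⊗⊥, s:1 whose denotation is ⟦Sync^A_{z,w}⟧ = { ((L_A a, *), (L_{A^⊥} a, *), *) | a ∈ ⟦A⟧ } (using that ⟦(A^⊥L)^⊥⊗⊥⟧ = ⟦A^⊥L⟧×{*} and ⟦((A^⊥)^⊥L)^⊥⊗⊥⟧ = ⟦(A^⊥)^⊥L⟧×{*}). -/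

import Mathlib

namespace PaS

/-! ### Names and CLL formulas (session types) -/

abbrev Name := ℕ

/-- CLL formulas / session types: `1, ⊥, ⊗, ⅋, ⊕, &, !, ?`. -/
inductive Form : Type
  | one
  | bot
  | tensor (A B : Form)
  | parr (A B : Form)
  | oplus (A B : Form)
  | wth (A B : Form)
  | bang (A : Form)
  | quest (A : Form)

/-- Duality on CLL formulas. -/
def Form.dual : Form → Form
  | .one => .bot
  | .bot => .one
  | .tensor A B => .parr A.dual B.dual
  | .parr A B => .tensor A.dual B.dual
  | .oplus A B => .wth A.dual B.dual
  | .wth A B => .oplus A.dual B.dual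
  | .bang A => .quest A.dual
  | .quest A => .bang A.dual

/-- Laurent's composed translation `(−)^⊥L` on CLL formulas (with parameter `R = 1`). -/
def transL : Form → Form
  | .one => .tensor .one .bot
  | .bot => .bot
  | .tensor A B => .tensor (.tensor (.parr (transL A) .one) (.parr (transL B) .one)) .bot
  | .parr A B => .parr (transL A) (transL B)
  | .oplus A B => .tensor (.oplus (.parr (transL A) .one) (.parr (transL B) .one)) .bot
  | .wth A B => .wth (transL A) (transL B)
  | .bang A => .tensor (.bang (.parr (transL A) .one)) .bot
  | .quest A => .quest (.tensor (.parr (transL A) .one) .bot)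

/-! ### Observation sets -/

/-- The set of observations `⟦A⟧` of a formula. -/
@[reducible] def Obs : Form → Type
  | .one => Unit
  | .bot => Unit
  | .tensor A B => Obs A × Obs B
  | .parr A B => Obs A × Obs B
  | .oplus A B => Obs A ⊕ Obs B
  | .wth A B => Obs A ⊕ Obs B
  | .bang A => Multiset (Obs A)
  | .quest A => Multiset (Obs A)

/-- Multiset congruence of equivalences. -/
def msCongr {α β : Type} (e : α ≃ β) : Multiset α ≃ Multiset β where
  toFun := Multiset.map e
  invFun := Multiset.map e.symm
  left_inv := fun m => by simp [Multiset.map_map, Function.comp]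
  right_inv := fun m => by simp [Multiset.map_map, Function.comp]

/-- The canonical identification `⟦A⟧ = ⟦A^⊥⟧`. -/
def dualObs : (A : Form) → Obs A ≃ Obs A.dual
  | .one => Equiv.refl Unit
  | .bot => Equiv.refl Unit
  | .tensor A B => (dualObs A).prodCongr (dualObs B)
  | .parr A B => (dualObs A).prodCongr (dualObs B)
  | .oplus A B => (dualObs A).sumCongr (dualObs B)
  | .wth A B => (dualObs A).sumCongr (dualObs B)
  | .bang A => msCongr (dualObs A)
  | .quest A => msCongr (dualObs A)

/-- The map `L_A : ⟦A⟧ → ⟦A^⊥L⟧`. -/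
def Lmap : (A : Form) → Obs A → Obs (transL A)
  | .one, _ => ((), ())
  | .bot, _ => ()
  | .tensor A B, o => (((Lmap A o.1, ()), (Lmap B o.2, ())), ())
  | .parr A B, o => (Lmap A o.1, Lmap B o.2)
  | .oplus A B, o =>
      (Sum.elim (fun a => Sum.inl (Lmap A a, ())) (fun b => Sum.inr (Lmap B b, ())) o, ())
  | .wth A B, o => Sum.elim (fun a => Sum.inl (Lmap A a)) (fun b => Sum.inr (Lmap B b)) o
  | .bang A, m => (Multiset.map (fun a => (Lmap A a, ())) m, ())
  | .quest A, m => Multiset.map (fun a => ((Lmap A a, ()), ())) m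

/-! ### Typing contexts and their observations -/

/-- A typing context: a finite list of assignments of formulas to names. -/
abbrev Ctx := List (Name × Form)

/-- Observations of a typing context: `⟦x₁:A₁,…,xₙ:Aₙ⟧ = ⟦A₁⟧×⋯×⟦Aₙ⟧`. -/
@[reducible] def ObsCtx : Ctx → Type
  | [] => Unit
  | p :: Γ => Obs p.2 × ObsCtx Γ

/-- Concatenation of observations. -/
def appObs : (Γ : Ctx) → {Δ : Ctx} → ObsCtx Γ → ObsCtx Δ → ObsCtx (Γ ++ Δ)
  | [], _, _, δ => δ
  | _ :: Γ, _, o, δ => (o.1, appObs Γ o.2 δ)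

/-- Laurent's translation on contexts, renaming names via `f`. -/
def ctxL (f : Name → Name) (Γ : Ctx) : Ctx := Γ.map (fun p => (f p.1, transL p.2))

/-- `L` applied componentwise to an observation of a context (without the final `*`). -/
def LmapCtx0 (f : Name → Name) : (Γ : Ctx) → ObsCtx Γ → ObsCtx (ctxL f Γ)
  | [], _ => ()
  | p :: Γ, o => (Lmap p.2 o.1, LmapCtx0 f Γ o.2)

/-- `L_Δ : ⟦Δ⟧ → ⟦Δ^⊥L, w:1⟧`, i.e. `L_Δ(a₁,…,aₙ) = (L a₁,…,L aₙ,*)`. -/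
def LmapCtx (f : Name → Name) (w : Name) (Γ : Ctx) (o : ObsCtx Γ) :
    ObsCtx (ctxL f Γ ++ [(w, Form.one)]) :=
  appObs (ctxL f Γ) (LmapCtx0 f Γ o) ((((), ()) : ObsCtx [(w, Form.one)]))

/-! ### One-sided sequent calculus for CLL + Mix0 -/

/-- One-sided sequent calculus for classical linear logic, extended with `Mix0`. -/
inductive CLLProof : Multiset Form → Prop
  | ax (A : Form) : CLLProof {A, A.dual}
  | one : CLLProof {Form.one}
  | mix0 : CLLProof 0
  | bot {Γ} : CLLProof Γ → CLLProof (Form.bot ::ₘ Γ)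
  | tensor {Γ Δ A B} : CLLProof (A ::ₘ Γ) → CLLProof (B ::ₘ Δ) →
      CLLProof (Form.tensor A B ::ₘ (Γ + Δ))
  | parr {Γ A B} : CLLProof (A ::ₘ B ::ₘ Γ) → CLLProof (Form.parr A B ::ₘ Γ)
  | oplusL {Γ A B} : CLLProof (A ::ₘ Γ) → CLLProof (Form.oplus A B ::ₘ Γ)
  | oplusR {Γ A B} : CLLProof (B ::ₘ Γ) → CLLProof (Form.oplus A B ::ₘ Γ)
  | wth {Γ A B} : CLLProof (A ::ₘ Γ) → CLLProof (B ::ₘ Γ) → CLLProof (Form.wth A B ::ₘ Γ)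
  | bang {Γ A} : (∀ C ∈ Γ, ∃ D, C = Form.quest D) → CLLProof (A ::ₘ Γ) →
      CLLProof (Form.bang A ::ₘ Γ)
  | quest {Γ A} : CLLProof (A ::ₘ Γ) → CLLProof (Form.quest A ::ₘ Γ)
  | weaken {Γ A} : CLLProof Γ → CLLProof (Form.quest A ::ₘ Γ)
  | contract {Γ A} : CLLProof (Form.quest A ::ₘ Form.quest A ::ₘ Γ) →
      CLLProof (Form.quest A ::ₘ Γ)
  | cut {Γ Δ A} : CLLProof (A ::ₘ Γ) → CLLProof (A.dual ::ₘ Δ) → CLLProof (Γ + Δ)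

/-! ### CP processes -/

/-- CP processes. -/
inductive Proc : Type
  | nil
  | fwd (x y : Name)
  | cut (x : Name) (P Q : Proc)
  | par (P Q : Proc)
  | out (x y : Name) (P Q : Proc)      -- x[y].(P|Q)
  | inp (x y : Name) (P : Proc)        -- x(y).P
  | server (x y : Name) (P : Proc)     -- !x(y).P
  | client (x y : Name) (P : Proc)     -- ?x[y].P
  | sel (x : Name) (i : Bool) (P : Proc)  -- x[1].P (false) / x[2].P (true)
  | cas (x : Name) (P Q : Proc)        -- x.case(P,Q)
  | close (x : Name)                   -- x[].0
  | wait (x : Name) (P : Proc)         -- x().P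

/-- Renaming: replace the name `b` by `a`. -/
def subName (a b n : Name) : Name := if n = b then a else n

/-- `P.rename a b` is `P{a/b}`. -/
def Proc.rename (a b : Name) : Proc → Proc
  | .nil => .nil
  | .fwd x y => .fwd (subName a b x) (subName a b y)
  | .cut x P Q => .cut (subName a b x) (P.rename a b) (Q.rename a b)
  | .par P Q => .par (P.rename a b) (Q.rename a b)
  | .out x y P Q => .out (subName a b x) (subName a b y) (P.rename a b) (Q.rename a b)
  | .inp x y P => .inp (subName a b x) (subName a b y) (P.rename a b)
  | .server x y P => .server (subName a b x) (subName a b y) (P.rename a b)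
  | .client x y P => .client (subName a b x) (subName a b y) (P.rename a b)
  | .sel x i P => .sel (subName a b x) i (P.rename a b)
  | .cas x P Q => .cas (subName a b x) (P.rename a b) (Q.rename a b)
  | .close x => .close (subName a b x)
  | .wait x P => .wait (subName a b x) (P.rename a b)

/-- A `?`-context `?Θ`, i.e. one where every formula is a `?`-formula. -/
def QCtx (Θ : List (Name × Form)) : Ctx := Θ.map (fun p => (p.1, Form.quest p.2))

/-- The empty observation of a `?`-context. -/
def qZero : (Θ : List (Name × Form)) → ObsCtx (QCtx Θ)
  | [] => ()
  | p :: Θ => ((0 : Multiset (Obs p.2)), qZero Θ)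

/-- Componentwise multiset union of observations of a `?`-context. -/
def qAdd : (Θ : List (Name × Form)) → ObsCtx (QCtx Θ) → ObsCtx (QCtx Θ) → ObsCtx (QCtx Θ)
  | [], _, _ => ()
  | p :: Θ, o, o' => ((o.1 + o'.1 : Multiset (Obs p.2)), qAdd Θ o.2 o'.2)

/-- Componentwise multiset union of a list of observations of a `?`-context. -/
def qSum (Θ : List (Name × Form)) (l : List (ObsCtx (QCtx Θ))) : ObsCtx (QCtx Θ) :=
  l.foldr (qAdd Θ) (qZero Θ)

/-! ### Typing for CP + Mix0, Mix2 -/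

/-- Typing judgments `P ⊢ Γ` of CP + Mix0 + Mix2 (implicit exchange). -/
inductive Types : Proc → Ctx → Prop
  | fwd (x y : Name) (A : Form) : Types (.fwd x y) [(x, A), (y, A.dual)]
  | close (x : Name) : Types (.close x) [(x, .one)]
  | nil : Types .nil []
  | wait (x : Name) {P Γ} : Types P Γ → Types (.wait x P) ((x, .bot) :: Γ)
  | out (x y : Name) {P Q : Proc} {A B Γ Δ} :
      Types P ((y, A) :: Γ) → Types Q ((x, B) :: Δ) →
      Types (.out x y P Q) ((x, .tensor A B) :: (Γ ++ Δ))
  | inp (x y : Name) {P : Proc} {A B Γ} :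
      Types P ((y, A) :: (x, B) :: Γ) → Types (.inp x y P) ((x, .parr A B) :: Γ)
  | selL (x : Name) {P : Proc} {A₁ A₂ Γ} :
      Types P ((x, A₁) :: Γ) → Types (.sel x false P) ((x, .oplus A₁ A₂) :: Γ)
  | selR (x : Name) {P : Proc} {A₁ A₂ Γ} :
      Types P ((x, A₂) :: Γ) → Types (.sel x true P) ((x, .oplus A₁ A₂) :: Γ)
  | cas (x : Name) {P Q : Proc} {A₁ A₂ Γ} :
      Types P ((x, A₁) :: Γ) → Types Q ((x, A₂) :: Γ) →
      Types (.cas x P Q) ((x, .wth A₁ A₂) :: Γ)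
  | server (x y : Name) {P : Proc} {A : Form} {Θ : List (Name × Form)} :
      Types P ((y, A) :: QCtx Θ) → Types (.server x y P) ((x, .bang A) :: QCtx Θ)
  | client (x y : Name) {P : Proc} {A Γ} :
      Types P ((y, A) :: Γ) → Types (.client x y P) ((x, .quest A) :: Γ)
  | weaken (x : Name) (A : Form) {P Γ} : Types P Γ → Types P ((x, .quest A) :: Γ)
  | contract (x₁ x₂ : Name) (A : Form) {P Γ} :
      Types P ((x₁, .quest A) :: (x₂, .quest A) :: Γ) →
      Types (P.rename x₁ x₂) ((x₁, .quest A) :: Γ)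
  | cut (x : Name) {P Q : Proc} {A Γ Δ} :
      Types P ((x, A) :: Γ) → Types Q ((x, A.dual) :: Δ) → Types (.cut x P Q) (Γ ++ Δ)
  | mix2 {P Q : Proc} {Γ Δ} : Types P Γ → Types Q Δ → Types (.par P Q) (Γ ++ Δ)
  | exch {P : Proc} {Γ Δ} : Types P Γ → Γ.Perm Δ → Types P Δ

/-! ### Atkey's denotational semantics (observed communications) -/

/-- Action of a context permutation on observations. -/
inductive ObsPerm : (Γ Δ : Ctx) → ObsCtx Γ → ObsCtx Δ → Prop
  | nil : ObsPerm [] [] () ()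
  | cons (p : Name × Form) {Γ Δ : Ctx} (a : Obs p.2) {o : ObsCtx Γ} {o' : ObsCtx Δ} :
      ObsPerm Γ Δ o o' → ObsPerm (p :: Γ) (p :: Δ) (a, o) (a, o')
  | swap (p q : Name × Form) (Γ : Ctx) (a : Obs p.2) (b : Obs q.2) (o : ObsCtx Γ) :
      ObsPerm (p :: q :: Γ) (q :: p :: Γ) (a, b, o) (b, a, o)
  | trans {Γ Δ Θ : Ctx} {o₁ : ObsCtx Γ} {o₂ : ObsCtx Δ} {o₃ : ObsCtx Θ} :
      ObsPerm Γ Δ o₁ o₂ → ObsPerm Δ Θ o₂ o₃ → ObsPerm Γ Θ o₁ o₃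

/-- Atkey's denotational semantics: `Den P Γ o` holds iff `o ∈ ⟦P ⊢ Γ⟧`
(for some typing derivation of `P ⊢ Γ`). -/
inductive Den : Proc → (Γ : Ctx) → ObsCtx Γ → Prop
  | fwd (x y : Name) (A : Form) (a : Obs A) :
      Den (.fwd x y) [(x, A), (y, A.dual)] (a, dualObs A a, ())
  | close (x : Name) : Den (.close x) [(x, .one)] ((), ())
  | nil : Den .nil [] ()
  | wait (x : Name) {P Γ} {o : ObsCtx Γ} :
      Den P Γ o → Den (.wait x P) ((x, .bot) :: Γ) ((), o)
  | out (x y : Name) {P Q : Proc} {A B : Form} {Γ Δ : Ctx}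
      {a : Obs A} {b : Obs B} {γ : ObsCtx Γ} {δ : ObsCtx Δ} :
      Den P ((y, A) :: Γ) (a, γ) → Den Q ((x, B) :: Δ) (b, δ) →
      Den (.out x y P Q) ((x, .tensor A B) :: (Γ ++ Δ)) ((a, b), appObs Γ γ δ)
  | inp (x y : Name) {P : Proc} {A B : Form} {Γ : Ctx}
      {a : Obs A} {b : Obs B} {γ : ObsCtx Γ} :
      Den P ((y, A) :: (x, B) :: Γ) (a, (b, γ)) →
      Den (.inp x y P) ((x, .parr A B) :: Γ) ((a, b), γ)
  | selL (x : Name) {P : Proc} {A₁ A₂ : Form} {Γ} {a : Obs A₁} {γ : ObsCtx Γ} :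
      Den P ((x, A₁) :: Γ) (a, γ) →
      Den (.sel x false P) ((x, .oplus A₁ A₂) :: Γ) (Sum.inl a, γ)
  | selR (x : Name) {P : Proc} {A₁ A₂ : Form} {Γ} {a : Obs A₂} {γ : ObsCtx Γ} :
      Den P ((x, A₂) :: Γ) (a, γ) →
      Den (.sel x true P) ((x, .oplus A₁ A₂) :: Γ) (Sum.inr a, γ)
  | casL (x : Name) {P Q : Proc} {A₁ A₂ : Form} {Γ} {a : Obs A₁} {γ : ObsCtx Γ} :
      Den P ((x, A₁) :: Γ) (a, γ) → Types Q ((x, A₂) :: Γ) →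
      Den (.cas x P Q) ((x, .wth A₁ A₂) :: Γ) (Sum.inl a, γ)
  | casR (x : Name) {P Q : Proc} {A₁ A₂ : Form} {Γ} {a : Obs A₂} {γ : ObsCtx Γ} :
      Types P ((x, A₁) :: Γ) → Den Q ((x, A₂) :: Γ) (a, γ) →
      Den (.cas x P Q) ((x, .wth A₁ A₂) :: Γ) (Sum.inr a, γ)
  | server (x y : Name) {P : Proc} {A : Form} {Θ : List (Name × Form)}
      (runs : List (Obs A × ObsCtx (QCtx Θ))) :
      Types P ((y, A) :: QCtx Θ) →
      (∀ r ∈ runs, Den P ((y, A) :: QCtx Θ) (r.1, r.2)) →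
      Den (.server x y P) ((x, .bang A) :: QCtx Θ)
        ((↑(runs.map Prod.fst) : Multiset (Obs A)), qSum Θ (runs.map Prod.snd))
  | client (x y : Name) {P : Proc} {A Γ} {a : Obs A} {γ : ObsCtx Γ} :
      Den P ((y, A) :: Γ) (a, γ) →
      Den (.client x y P) ((x, .quest A) :: Γ) (({a} : Multiset (Obs A)), γ)
  | weaken (x : Name) (A : Form) {P Γ} {o : ObsCtx Γ} :
      Den P Γ o → Den P ((x, .quest A) :: Γ) ((0 : Multiset (Obs A)), o)
  | contract (x₁ x₂ : Name) (A : Form) {P Γ} {α₁ α₂ : Multiset (Obs A)} {δ : ObsCtx Γ} :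
      Den P ((x₁, .quest A) :: (x₂, .quest A) :: Γ) (α₁, (α₂, δ)) →
      Den (P.rename x₁ x₂) ((x₁, .quest A) :: Γ) (α₁ + α₂, δ)
  | cut (x : Name) {P Q : Proc} {A Γ Δ} (a : Obs A) {γ : ObsCtx Γ} {δ : ObsCtx Δ} :
      Den P ((x, A) :: Γ) (a, γ) → Den Q ((x, A.dual) :: Δ) (dualObs A a, δ) →
      Den (.cut x P Q) (Γ ++ Δ) (appObs Γ γ δ)
  | mix2 {P Q : Proc} {Γ Δ} {γ : ObsCtx Γ} {δ : ObsCtx Δ} :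
      Den P Γ γ → Den Q Δ δ → Den (.par P Q) (Γ ++ Δ) (appObs Γ γ δ)
  | exch {P : Proc} {Γ Δ} {o : ObsCtx Γ} {o' : ObsCtx Δ} :
      Den P Γ o → ObsPerm Γ Δ o o' → Den P Δ o'

/-- `⟦P ⊢ Γ⟧ ⊆ ⟦Γ⟧`. -/
def Sem (P : Proc) (Γ : Ctx) : Set (ObsCtx Γ) := {o | Den P Γ o}

/-- Observational equivalence `P ≅ Q` at `Γ` (equality of denotations, which
coincides with Atkey's observational equivalence by adequacy). -/
def ObsEq (P Q : Proc) (Γ : Ctx) : Prop := Sem P Γ = Sem Q Γ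

/-! ### Transformer processes and transformer contexts -/

/-- Transformer processes `T^A_{x,x'}`; the extra argument `k` is a supply of
fresh names (all names `≥ k` are fresh). -/
def Transf : Form → Name → Name → Name → Proc
  | .bot, x, x', _ => .fwd x x'
  | .one, x, x', k => .out x' k (.fwd k x) (.wait x' .nil)
  | .tensor A B, x, z, k =>
      .inp x k (.out z (k+1)
        (.out (k+1) (k+2)
          (.inp (k+2) (k+3) (.par (Transf A k (k+3) (k+5)) (.close (k+2))))
          (.inp (k+1) (k+4) (.par (Transf B x (k+4) (k+5)) (.close (k+1)))))
        (.wait z .nil))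
  | .parr A B, x, x', k =>
      .inp x' k (.inp x (k+1) (.par (Transf A (k+1) k (k+2)) (Transf B x x' (k+2))))
  | .bang A, x, x', k =>
      .out x' k (.server k (k+1) (.client x (k+2) (.inp (k+1) (k+3)
          (.par (Transf A (k+2) (k+3) (k+4)) (.close (k+1)))))) (.wait x' .nil)
  | .quest A, x, x', k =>
      .server x k (.client x' (k+1) (.out (k+1) (k+2)
          (.inp (k+2) (k+3) (.par (Transf A k (k+3) (k+4)) (.close (k+2))))
          (.wait (k+1) .nil)))
  | .wth A B, x, x', k =>
      .cas x' (.sel x false (Transf A x x' k)) (.sel x true (Transf B x x' k))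
  | .oplus A B, x, x', k =>
      .cas x
        (.out x' k (.sel k false (.inp k (k+1) (.par (Transf A x (k+1) (k+2)) (.close k))))
          (.wait x' .nil))
        (.out x' k (.sel k true (.inp k (k+1) (.par (Transf B x (k+1) (k+2)) (.close k))))
          (.wait x' .nil))

/-- The transformer process `T^A_{x,x'} ⊢ x:A^⊥, x':A^⊥L`. -/
def TransfP (A : Form) (x x' : Name) : Proc := Transf A x x' (max x x' + 1)

/-- The transformer context `T_Δ^{-}[·]` applied to `P`:
`(νxₙ)(⋯((νx₁)(P | T^{A₁}_{x₁,f x₁})⋯) | T^{Aₙ}_{xₙ,f xₙ})`. -/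
def TCtxFill (f : Name → Name) : Ctx → Proc → Proc
  | [], P => P
  | (x, A) :: Δ, P => TCtxFill f Δ (.cut x P (TransfP A x (f x)))

/-- The transformer context with closing name `z`: `T_Δ[P] = T_Δ^{-}[P] | z[].0`. -/
def TCtx (f : Name → Name) (Δ : Ctx) (z : Name) (P : Proc) : Proc :=
  .par (TCtxFill f Δ P) (.close z)

/-! ### Typed process contexts with one hole -/

/-- Process contexts with one hole: `K ::= [·] | (νx)(K|Q) | K|Q`. -/
inductive PCtx : Type
  | hole
  | cut (x : Name) (K : PCtx) (Q : Proc)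
  | par (K : PCtx) (Q : Proc)

/-- Filling the hole of a context. -/
def PCtx.fill : PCtx → Proc → Proc
  | .hole, P => P
  | .cut x K Q, P => .cut x (K.fill P) Q
  | .par K Q, P => .par (K.fill P) Q

/-- Composition of contexts (plug the second into the hole of the first). -/
def PCtx.comp : PCtx → PCtx → PCtx
  | .hole, K' => K'
  | .cut x K Q, K' => .cut x (K.comp K') Q
  | .par K Q, K' => .par (K.comp K') Q

/-- Context typing `K : Δ ⊢ Γ`. -/
inductive PCtxTy : PCtx → Ctx → Ctx → Prop
  | hole (Δ : Ctx) : PCtxTy .hole Δ Δ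
  | cut {K : PCtx} {Δ Γ Δ' : Ctx} {x : Name} {A : Form} {Q : Proc} :
      PCtxTy K Δ ((x, A) :: Γ) → Types Q ((x, A.dual) :: Δ') →
      PCtxTy (.cut x K Q) Δ (Γ ++ Δ')
  | par {K : PCtx} {Δ Γ Δ' : Ctx} {Q : Proc} :
      PCtxTy K Δ Γ → Types Q Δ' → PCtxTy (.par K Q) Δ (Γ ++ Δ')

/-- The set-level function `⟦K⟧ : 𝒫(⟦Δ⟧) → 𝒫(⟦Γ⟧)` induced by a context, as a relation:
`KSem K Δ Γ X o` holds iff `o ∈ ⟦K⟧(X)`. -/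
inductive KSem : (K : PCtx) → (Δ Γ : Ctx) → Set (ObsCtx Δ) → ObsCtx Γ → Prop
  | hole {Δ : Ctx} {X : Set (ObsCtx Δ)} {o : ObsCtx Δ} : o ∈ X → KSem .hole Δ Δ X o
  | cut {K : PCtx} {Δ Γ Δ' : Ctx} {x : Name} {A : Form} {Q : Proc}
      {X : Set (ObsCtx Δ)} (a : Obs A) {σ : ObsCtx Γ} {γ : ObsCtx Δ'} :
      KSem K Δ ((x, A) :: Γ) X (a, σ) →
      (dualObs A a, γ) ∈ Sem Q ((x, A.dual) :: Δ') →
      KSem (.cut x K Q) Δ (Γ ++ Δ') X (appObs Γ σ γ)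
  | par {K : PCtx} {Δ Γ Δ' : Ctx} {Q : Proc}
      {X : Set (ObsCtx Δ)} {σ : ObsCtx Γ} {γ : ObsCtx Δ'} :
      KSem K Δ Γ X σ → γ ∈ Sem Q Δ' → KSem (.par K Q) Δ (Γ ++ Δ') X (appObs Γ σ γ)

/-- The transformer context `T_Δ^{-}[·]` as a process context. -/
def TPCtxMinus (f : Name → Name) : Ctx → PCtx
  | [] => .hole
  | (x, A) :: Δ => (TPCtxMinus f Δ).comp (.cut x .hole (TransfP A x (f x)))

/-- The transformer context with closing name `w` as a process context. -/
def TPCtx (f : Name → Name) (Δ : Ctx) (w : Name) : PCtx :=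
  .par (TPCtxMinus f Δ) (.close w)


/-! ### Multiset view of contexts and observations -/

/-- A formula together with an observation. -/
abbrev Sg := (A : Form) × Obs A

/-- A named formula with an observation. -/
abbrev Entry := Name × Sg

/-- Build an entry. -/
def ent (x : Name) (A : Form) (a : Obs A) : Entry := (x, ⟨A, a⟩)

/-- The multiset of entries of a context observation. -/
def ms : (Γ : Ctx) → ObsCtx Γ → Multiset Entry
  | [], _ => 0
  | p :: Γ, o => ent p.1 p.2 o.1 ::ₘ ms Γ o.2

theorem ms_app (Γ : Ctx) {Δ : Ctx} (γ : ObsCtx Γ) (δ : ObsCtx Δ) :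
    ms (Γ ++ Δ) (appObs Γ γ δ) = ms Γ γ + ms Δ δ := by
  induction Γ with
  | nil => simp [ms, appObs]
  | cons p Γ ih => simp [ms, appObs, ih]

theorem ObsPerm.ms_eq {Γ Δ : Ctx} {o : ObsCtx Γ} {o' : ObsCtx Δ} (h : ObsPerm Γ Δ o o') :
    ms Γ o = ms Δ o' := by
  induction h with
  | nil => rfl
  | cons p a _ ih => simp [ms, ih]
  | swap p q Γ a b o => simp only [ms]; rw [Multiset.cons_swap]
  | trans _ _ ih1 ih2 => exact ih1.trans ih2

theorem ObsPerm.refl : (Γ : Ctx) → (o : ObsCtx Γ) → ObsPerm Γ Γ o o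
  | [], _ => .nil
  | p :: Γ, o => .cons p o.1 (ObsPerm.refl Γ o.2)

theorem exists_extract (e : Entry) : (Δ : Ctx) → (o : ObsCtx Δ) → e ∈ ms Δ o →
    ∃ (Δ' : Ctx) (o' : ObsCtx Δ'), ObsPerm ((e.1, e.2.1) :: Δ') Δ (e.2.2, o') o
  | [], _, h => by simp [ms] at h
  | p :: Δ, o, h => by
    simp only [ms, Multiset.mem_cons] at h
    rcases h with h | h
    · subst h
      exact ⟨Δ, o.2, ObsPerm.refl (p :: Δ) o⟩
    · obtain ⟨Δ', o', h'⟩ := exists_extract e Δ o.2 h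
      refine ⟨p :: Δ', (o.1, o'), ?_⟩
      exact (ObsPerm.swap (e.1, e.2.1) p Δ' e.2.2 o.1 o').trans (.cons p o.1 h')

theorem obsPerm_of_ms : (Γ Δ : Ctx) → (o : ObsCtx Γ) → (o' : ObsCtx Δ) →
    ms Γ o = ms Δ o' → ObsPerm Γ Δ o o'
  | [], [], _, _, _ => .nil
  | [], p :: Δ, _, _, h => by
    simp only [ms] at h
    exact absurd h (Multiset.zero_ne_cons)
  | p :: Γ, Δ, o, o', h => by
    have hm : ent p.1 p.2 o.1 ∈ ms Δ o' := by rw [← h]; simp [ms]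
    obtain ⟨Δ', d, hd⟩ := exists_extract _ Δ o' hm
    have h2 := hd.ms_eq
    rw [← h] at h2
    simp only [ms, ent, Multiset.cons_inj_right] at h2
    exact (ObsPerm.cons p o.1 (obsPerm_of_ms Γ Δ' o.2 d h2.symm)).trans hd

theorem exists_ms (M : Multiset Entry) : ∃ (Γ : Ctx) (o : ObsCtx Γ), ms Γ o = M := by
  induction M using Multiset.induction_on with
  | empty => exact ⟨[], (), rfl⟩
  | cons e M ih =>
    obtain ⟨Γ, o, rfl⟩ := ih
    exact ⟨(e.1, e.2.1) :: Γ, (e.2.2, o), rfl⟩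

/-- Denotation on multisets of entries. -/
def DenM (P : Proc) (M : Multiset Entry) : Prop := ∃ (Γ : Ctx) (o : ObsCtx Γ), ms Γ o = M ∧ Den P Γ o

theorem denM_iff {P : Proc} {Γ : Ctx} {o : ObsCtx Γ} : DenM P (ms Γ o) ↔ Den P Γ o := by
  constructor
  · rintro ⟨Δ, d, h, hd⟩
    exact .exch hd (obsPerm_of_ms _ _ _ _ h)
  · intro h
    exact ⟨Γ, o, rfl, h⟩

/-- Typing on multisets. -/
def TyM (P : Proc) (M : Multiset (Name × Form)) : Prop := ∃ Γ : Ctx, (Γ : Multiset _) = M ∧ Types P Γ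

theorem tyM_iff {P : Proc} {Γ : Ctx} : TyM P (Γ : Multiset (Name × Form)) ↔ Types P Γ := by
  constructor
  · rintro ⟨Δ, h, hd⟩
    exact .exch hd (Multiset.coe_eq_coe.1 h)
  · intro h
    exact ⟨Γ, rfl, h⟩

theorem exists_list (M : Multiset (Name × Form)) : ∃ Γ : Ctx, (Γ : Multiset _) = M :=
  Quot.exists_rep M

theorem TyM.wait {x P M} (h : TyM P M) : TyM (.wait x P) ((x, .bot) ::ₘ M) := by
  obtain ⟨Γ, rfl, h⟩ := h
  exact ⟨_ :: Γ, rfl, .wait x h⟩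

theorem TyM.out {x y P Q A B M N} (h : TyM P ((y, A) ::ₘ M)) (h' : TyM Q ((x, B) ::ₘ N)) :
    TyM (.out x y P Q) ((x, .tensor A B) ::ₘ (M + N)) := by
  obtain ⟨Γ, rfl⟩ := exists_list M
  obtain ⟨Δ, rfl⟩ := exists_list N
  rw [Multiset.cons_coe, tyM_iff] at h h'
  exact ⟨_ :: (Γ ++ Δ), rfl, .out x y h h'⟩

theorem TyM.inp {x y P A B M} (h : TyM P ((y, A) ::ₘ (x, B) ::ₘ M)) :
    TyM (.inp x y P) ((x, .parr A B) ::ₘ M) := by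
  obtain ⟨Γ, rfl⟩ := exists_list M
  rw [Multiset.cons_coe, Multiset.cons_coe, tyM_iff] at h
  exact ⟨_ :: Γ, rfl, .inp x y h⟩

theorem TyM.selL {x P A B M} (h : TyM P ((x, A) ::ₘ M)) :
    TyM (.sel x false P) ((x, .oplus A B) ::ₘ M) := by
  obtain ⟨Γ, rfl⟩ := exists_list M
  rw [Multiset.cons_coe, tyM_iff] at h
  exact ⟨_ :: Γ, rfl, .selL x h⟩

theorem TyM.selR {x P A B M} (h : TyM P ((x, B) ::ₘ M)) :
    TyM (.sel x true P) ((x, .oplus A B) ::ₘ M) := by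
  obtain ⟨Γ, rfl⟩ := exists_list M
  rw [Multiset.cons_coe, tyM_iff] at h
  exact ⟨_ :: Γ, rfl, .selR x h⟩

theorem TyM.cas {x P Q A B M} (h : TyM P ((x, A) ::ₘ M)) (h' : TyM Q ((x, B) ::ₘ M)) :
    TyM (.cas x P Q) ((x, .wth A B) ::ₘ M) := by
  obtain ⟨Γ, rfl⟩ := exists_list M
  rw [Multiset.cons_coe, tyM_iff] at h h'
  exact ⟨_ :: Γ, rfl, .cas x h h'⟩

theorem TyM.par {P Q M N} (h : TyM P M) (h' : TyM Q N) : TyM (.par P Q) (M + N) := by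
  obtain ⟨Γ, rfl, h⟩ := h
  obtain ⟨Δ, rfl, h'⟩ := h'
  exact ⟨Γ ++ Δ, rfl, .mix2 h h'⟩

theorem TyM.cut {x P Q A M N} (h : TyM P ((x, A) ::ₘ M)) (h' : TyM Q ((x, A.dual) ::ₘ N)) :
    TyM (.cut x P Q) (M + N) := by
  obtain ⟨Γ, rfl⟩ := exists_list M
  obtain ⟨Δ, rfl⟩ := exists_list N
  rw [Multiset.cons_coe, tyM_iff] at h h'
  exact ⟨Γ ++ Δ, rfl, .cut x h h'⟩

theorem TyM.nil : TyM .nil 0 := ⟨[], rfl, .nil⟩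

theorem TyM.close {x} : TyM (.close x) {(x, .one)} := ⟨[_], rfl, .close x⟩

/-! Denotation rules on multisets -/

theorem DenM.wait {x P M} (h : DenM P M) : DenM (.wait x P) (ent x .bot () ::ₘ M) := by
  obtain ⟨Γ, o, rfl, h⟩ := h
  exact ⟨(x, .bot) :: Γ, ((), o), rfl, .wait x h⟩

theorem DenM.out {x y P Q A B a b M N} (h : DenM P (ent y A a ::ₘ M)) (h' : DenM Q (ent x B b ::ₘ N)) :
    DenM (.out x y P Q) (ent x (.tensor A B) (a, b) ::ₘ (M + N)) := by
  obtain ⟨Γ, o, rfl⟩ := exists_ms M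
  obtain ⟨Δ, o', rfl⟩ := exists_ms N
  have h1 : Den P ((y, A) :: Γ) (a, o) := denM_iff.1 h
  have h2 : Den Q ((x, B) :: Δ) (b, o') := denM_iff.1 h'
  refine ⟨_, _, ?_, .out x y h1 h2⟩
  simp [ms, ms_app]

theorem DenM.inp {x y P A B a b M} (h : DenM P (ent y A a ::ₘ ent x B b ::ₘ M)) :
    DenM (.inp x y P) (ent x (.parr A B) (a, b) ::ₘ M) := by
  obtain ⟨Γ, o, rfl⟩ := exists_ms M
  have h1 : Den P ((y, A) :: (x, B) :: Γ) (a, (b, o)) := denM_iff.1 h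
  exact ⟨_, _, rfl, .inp x y h1⟩

theorem DenM.selL {x P A B a M} (h : DenM P (ent x A a ::ₘ M)) :
    DenM (.sel x false P) (ent x (.oplus A B) (Sum.inl a) ::ₘ M) := by
  obtain ⟨Γ, o, rfl⟩ := exists_ms M
  have h1 : Den P ((x, A) :: Γ) (a, o) := denM_iff.1 h
  exact ⟨_, _, rfl, .selL x h1⟩

theorem DenM.selR {x P A B a M} (h : DenM P (ent x B a ::ₘ M)) :
    DenM (.sel x true P) (ent x (.oplus A B) (Sum.inr a) ::ₘ M) := by
  obtain ⟨Γ, o, rfl⟩ := exists_ms M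
  have h1 : Den P ((x, B) :: Γ) (a, o) := denM_iff.1 h
  exact ⟨_, _, rfl, .selR x h1⟩

/-- Forget observations. -/
def tyOf (e : Entry) : Name × Form := (e.1, e.2.1)

theorem ms_tyOf : (Γ : Ctx) → (o : ObsCtx Γ) → (ms Γ o).map tyOf = (Γ : Multiset _)
  | [], _ => rfl
  | p :: Γ, o => by simp [ms, ms_tyOf Γ, ent, tyOf]

theorem DenM.casL {x P Q A B a M} (h : DenM P (ent x A a ::ₘ M))
    (h' : TyM Q ((x, B) ::ₘ M.map tyOf)) :
    DenM (.cas x P Q) (ent x (.wth A B) (Sum.inl a) ::ₘ M) := by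
  obtain ⟨Γ, o, rfl⟩ := exists_ms M
  have h1 : Den P ((x, A) :: Γ) (a, o) := denM_iff.1 h
  rw [ms_tyOf, Multiset.cons_coe, tyM_iff] at h'
  exact ⟨_, _, rfl, .casL x h1 h'⟩

theorem DenM.casR {x P Q A B a M} (h' : TyM P ((x, A) ::ₘ M.map tyOf))
    (h : DenM Q (ent x B a ::ₘ M)) :
    DenM (.cas x P Q) (ent x (.wth A B) (Sum.inr a) ::ₘ M) := by
  obtain ⟨Γ, o, rfl⟩ := exists_ms M
  have h1 : Den Q ((x, B) :: Γ) (a, o) := denM_iff.1 h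
  rw [ms_tyOf, Multiset.cons_coe, tyM_iff] at h'
  exact ⟨_, _, rfl, .casR x h' h1⟩

theorem DenM.par {P Q M N} (h : DenM P M) (h' : DenM Q N) : DenM (.par P Q) (M + N) := by
  obtain ⟨Γ, o, rfl, h⟩ := h
  obtain ⟨Δ, o', rfl, h'⟩ := h'
  exact ⟨_, _, ms_app _ _ _, .mix2 h h'⟩

theorem DenM.cut {x P Q A M N} (a : Obs A) (h : DenM P (ent x A a ::ₘ M))
    (h' : DenM Q (ent x A.dual (dualObs A a) ::ₘ N)) :
    DenM (.cut x P Q) (M + N) := by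
  obtain ⟨Γ, o, rfl⟩ := exists_ms M
  obtain ⟨Δ, o', rfl⟩ := exists_ms N
  have h1 : Den P ((x, A) :: Γ) (a, o) := denM_iff.1 h
  have h2 : Den Q ((x, A.dual) :: Δ) (dualObs A a, o') := denM_iff.1 h'
  exact ⟨_, _, ms_app _ _ _, .cut x a h1 h2⟩

theorem DenM.nil : DenM .nil 0 := ⟨[], (), rfl, .nil⟩

theorem DenM.close {x} : DenM (.close x) {ent x .one ()} := ⟨[(x, .one)], ((), ()), rfl, .close x⟩

/-! ### Inversion in contexts without `?`-formulas -/

/-- Being a `?`-formula. -/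
def isQ : Form → Prop
  | .quest _ => True
  | _ => False

/-- No `?`-formula in the context. -/
def NoQ (M : Multiset Entry) : Prop := ∀ e ∈ M, ¬ isQ e.2.1

/-- One-step inversion predicate. -/
def Inv : Proc → Multiset Entry → Prop
  | .nil, M => M = 0
  | .fwd _ _, _ => True
  | .close x, M => M = {ent x .one ()}
  | .wait x P, M => ∃ M', M = ent x .bot () ::ₘ M' ∧ DenM P M'
  | .out x y P Q, M => ∃ A B a b M₁ M₂, M = ent x (.tensor A B) (a, b) ::ₘ (M₁ + M₂) ∧
      DenM P (ent y A a ::ₘ M₁) ∧ DenM Q (ent x B b ::ₘ M₂)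
  | .inp x y P, M => ∃ A B a b M', M = ent x (.parr A B) (a, b) ::ₘ M' ∧
      DenM P (ent y A a ::ₘ ent x B b ::ₘ M')
  | .sel x false P, M => ∃ A B a M', M = ent x (.oplus A B) (Sum.inl a) ::ₘ M' ∧
      DenM P (ent x A a ::ₘ M')
  | .sel x true P, M => ∃ A B b M', M = ent x (.oplus A B) (Sum.inr b) ::ₘ M' ∧
      DenM P (ent x B b ::ₘ M')
  | .cas x P Q, M => ∃ A B M', (∃ a, M = ent x (.wth A B) (Sum.inl a) ::ₘ M' ∧
      DenM P (ent x A a ::ₘ M')) ∨ (∃ b, M = ent x (.wth A B) (Sum.inr b) ::ₘ M' ∧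
      DenM Q (ent x B b ::ₘ M'))
  | .par P Q, M => ∃ M₁ M₂, M = M₁ + M₂ ∧ DenM P M₁ ∧ DenM Q M₂
  | .cut x P Q, M => ∃ (A : Form) (a : Obs A) (M₁ M₂ : Multiset Entry), M = M₁ + M₂ ∧
      DenM P (ent x A a ::ₘ M₁) ∧ DenM Q (ent x A.dual (dualObs A a) ::ₘ M₂)
  | .server x y P, M => ∃ (A : Form) (m : Multiset (Obs A)), M = {ent x (.bang A) m} ∧
      ∀ r ∈ m, DenM P {ent y A r}
  | .client _ _ _, _ => True

theorem den_inv {P : Proc} {Γ : Ctx} {o : ObsCtx Γ} (h : Den P Γ o) : NoQ (ms Γ o) → Inv P (ms Γ o) := by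
  induction h with
  | fwd => intro _; trivial
  | close x => intro _; rfl
  | nil => intro _; rfl
  | wait x h _ => intro _; exact ⟨_, rfl, denM_iff.2 h⟩
  | out x y h1 h2 _ _ =>
    intro _
    exact ⟨_, _, _, _, _, _, by simp only [ms, ms_app], (denM_iff (Γ := _ :: _)).2 h1,
      (denM_iff (Γ := _ :: _)).2 h2⟩
  | inp x y h _ => intro _; exact ⟨_, _, _, _, _, rfl, (denM_iff (Γ := _ :: _ :: _)).2 h⟩
  | selL x h _ => intro _; exact ⟨_, _, _, _, rfl, (denM_iff (Γ := _ :: _)).2 h⟩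
  | selR x h _ => intro _; exact ⟨_, _, _, _, rfl, (denM_iff (Γ := _ :: _)).2 h⟩
  | casL x h _ _ => intro _; exact ⟨_, _, _, Or.inl ⟨_, rfl, (denM_iff (Γ := _ :: _)).2 h⟩⟩
  | casR x _ h _ => intro _; exact ⟨_, _, _, Or.inr ⟨_, rfl, (denM_iff (Γ := _ :: _)).2 h⟩⟩
  | @server x y P A Θ runs ht hr _ =>
    intro hn
    cases Θ with
    | nil =>
      refine ⟨A, _, rfl, ?_⟩
      intro r hrm
      simp only [Multiset.mem_coe, List.mem_map] at hrm
      obtain ⟨r', hr', rfl⟩ := hrm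
      exact (denM_iff (Γ := [_])).2 (hr r' hr')
    | cons p Θ =>
      exfalso
      refine hn (ent p.1 (.quest p.2) (qSum (p :: Θ) (runs.map Prod.snd)).1) ?_ trivial
      exact Multiset.mem_cons_of_mem (Multiset.mem_cons_self _ _)
  | client => intro _; trivial
  | weaken x A h _ => intro hn; exact absurd trivial (hn (ent x (.quest A) _) (Multiset.mem_cons_self _ _))
  | contract x₁ x₂ A h _ =>
    intro hn; exact absurd trivial (hn (ent x₁ (.quest A) _) (Multiset.mem_cons_self _ _))
  | cut x a h1 h2 _ _ =>
    intro _
    exact ⟨_, a, _, _, ms_app _ _ _, (denM_iff (Γ := _ :: _)).2 h1, (denM_iff (Γ := _ :: _)).2 h2⟩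
  | mix2 h1 h2 _ _ => intro _; exact ⟨_, _, ms_app _ _ _, denM_iff.2 h1, denM_iff.2 h2⟩
  | exch h hp ih => rw [← hp.ms_eq]; exact ih

theorem DenM.inv {P : Proc} {M : Multiset Entry} (h : DenM P M) (hn : NoQ M) : Inv P M := by
  obtain ⟨Γ, o, rfl, h⟩ := h
  exact den_inv h hn

/-- Resolving the principal formula by its name. -/
theorem resolve {x : Name} {s t : Sg} {M N : Multiset Entry}
    (h : (x, s) ::ₘ M = (x, t) ::ₘ N) (hN : ∀ e ∈ N, e.1 ≠ x) : s = t ∧ M = N := by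
  have h1 : (x, s) ∈ (x, t) ::ₘ N := by rw [← h]; simp
  rw [Multiset.mem_cons] at h1
  rcases h1 with h1 | h1
  · simp only [Prod.mk.injEq, true_and] at h1
    subst h1
    exact ⟨rfl, by simpa using h⟩
  · exact absurd rfl (hN _ h1)



/-! ### A name-free over-approximation of the semantics -/

/-- Name-free states: linear part and `?`-part. -/
abbrev St := Multiset Sg × Multiset Sg

/-- The state of one formula. -/
def emb : (A : Form) → Obs A → St
  | .quest B, m => (0, Multiset.map (fun b => (⟨B, b⟩ : Sg)) m)
  | A, a => ({⟨A, a⟩}, 0)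

theorem emb_nq {A : Form} (h : ¬ isQ A) (a : Obs A) : emb A a = ({⟨A, a⟩}, 0) := by
  cases A <;> first | rfl | exact absurd trivial h

theorem emb_quest (B : Form) (m : Multiset (Obs B)) :
    emb (.quest B) m = (0, Multiset.map (fun b => (⟨B, b⟩ : Sg)) m) := rfl

/-- Forget the names. -/
def fg (M : Multiset Entry) : St := (M.map (fun e => emb e.2.1 e.2.2)).sum

@[simp] theorem fg_zero : fg 0 = 0 := rfl
@[simp] theorem fg_cons (x A a M) : fg (ent x A a ::ₘ M) = emb A a + fg M := by
  simp [fg, ent]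
@[simp] theorem fg_single (x A a) : fg {ent x A a} = emb A a := by
  simp [fg, ent]
@[simp] theorem fg_add (M N) : fg (M + N) = fg M + fg N := by
  simp [fg]

/-- Name-free semantics. -/
def NS : Proc → St → Prop
  | .nil, t => t = 0
  | .fwd _ _, t => ∃ (A : Form) (a : Obs A), t = emb A a + emb A.dual (dualObs A a)
  | .close _, t => t = emb .one ()
  | .wait _ P, t => ∃ u, NS P u ∧ t = emb .bot () + u
  | .out _ _ P Q, t => ∃ (A B : Form) (a : Obs A) (b : Obs B) (γ δ : St),
      NS P (emb A a + γ) ∧ NS Q (emb B b + δ) ∧ t = emb (.tensor A B) (a, b) + (γ + δ)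
  | .inp _ _ P, t => ∃ (A B : Form) (a : Obs A) (b : Obs B) (γ : St),
      NS P (emb A a + (emb B b + γ)) ∧ t = emb (.parr A B) (a, b) + γ
  | .sel _ _ _, _ => True
  | .cas _ _ _, _ => True
  | .cut _ _ _, _ => True
  | .par P Q, t => ∃ u v, NS P u ∧ NS Q v ∧ t = u + v
  | .server _ _ P, t => ∃ (A : Form) (runs : List (Obs A × Multiset Sg)),
      (∀ r ∈ runs, NS P (emb A r.1 + (0, r.2))) ∧
      t = emb (.bang A) (↑(runs.map Prod.fst)) + (0, (runs.map Prod.snd).sum)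
  | .client _ _ P, t => ∃ (A : Form) (a : Obs A) (γ : St),
      NS P (emb A a + γ) ∧ t = emb (.quest A) {a} + γ

theorem NS_rename (x y : Name) (P : Proc) : NS (P.rename x y) = NS P := by
  induction P <;> funext t <;> simp_all [NS, Proc.rename]

/-- The `?`-part of a `?`-context observation. -/
def gq : (Θ : List (Name × Form)) → ObsCtx (QCtx Θ) → Multiset Sg
  | [], _ => 0
  | p :: Θ, o => Multiset.map (fun b => (⟨p.2, b⟩ : Sg)) o.1 + gq Θ o.2

theorem fg_q : (Θ : List (Name × Form)) → (o : ObsCtx (QCtx Θ)) → fg (ms (QCtx Θ) o) = (0, gq Θ o)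
  | [], _ => rfl
  | p :: Θ, o => by
    have h := fg_q Θ o.2
    have : fg (ms (QCtx (p :: Θ)) o) = emb (.quest p.2) o.1 + fg (ms (QCtx Θ) o.2) := fg_cons _ _ _ _
    rw [this, h, emb_quest]
    simp [gq]

theorem gq_zero : (Θ : List (Name × Form)) → gq Θ (qZero Θ) = 0
  | [] => rfl
  | p :: Θ => by
    have h := gq_zero Θ
    simp only [gq, qZero, h]; simp

theorem gq_add : (Θ : List (Name × Form)) → (o o' : ObsCtx (QCtx Θ)) →
    gq Θ (qAdd Θ o o') = gq Θ o + gq Θ o'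
  | [], _, _ => rfl
  | p :: Θ, o, o' => by
    have h := gq_add Θ o.2 o'.2
    simp only [gq, qAdd, h, Multiset.map_add]
    abel

theorem gq_sum (Θ : List (Name × Form)) (l : List (ObsCtx (QCtx Θ))) :
    gq Θ (qSum Θ l) = (l.map (gq Θ)).sum := by
  induction l with
  | nil => exact gq_zero Θ
  | cons o l ih =>
    have : qSum Θ (o :: l) = qAdd Θ o (qSum Θ l) := rfl
    rw [this, gq_add, ih]; simp

theorem den_NS {P : Proc} {Γ : Ctx} {o : ObsCtx Γ} (h : Den P Γ o) : NS P (fg (ms Γ o)) := by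
  induction h with
  | fwd x y A a => exact ⟨A, a, by simp [ms]⟩
  | close x => simp [ms, NS]
  | nil => rfl
  | wait x h ih => exact ⟨_, ih, by simp [ms]⟩
  | out x y h1 h2 ih1 ih2 =>
    exact ⟨_, _, _, _, _, _, by simpa only [ms, fg_cons] using ih1, by simpa only [ms, fg_cons] using ih2,
      by simp only [ms, ms_app, fg_cons, fg_add]⟩
  | inp x y h ih =>
    exact ⟨_, _, _, _, _, by simpa only [ms, fg_cons] using ih, by simp only [ms, fg_cons]⟩
  | selL => trivial
  | selR => trivial
  | casL => trivial
  | casR => trivial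
  | @server x y P A Θ runs ht hr ih =>
    refine ⟨A, runs.map (fun r => (r.1, gq Θ r.2)), ?_, ?_⟩
    · intro r hr
      simp only [List.mem_map] at hr
      obtain ⟨r', hr', rfl⟩ := hr
      have := ih r' hr'
      simpa only [ms, fg_cons, fg_q] using this
    · simp only [ms, fg_cons, fg_q, gq_sum, List.map_map]
      rfl
  | client x y h ih =>
    exact ⟨_, _, _, by simpa only [ms, fg_cons] using ih, by simp only [ms, fg_cons]⟩
  | weaken x A h ih =>
    have e : emb (.quest A) (0 : Multiset (Obs A)) = 0 := rfl
    simp only [ms, fg_cons, e, zero_add]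
    exact ih
  | @contract x₁ x₂ A P Γ α₁ α₂ δ h ih =>
    rw [NS_rename]
    have e : fg (ms ((x₁, Form.quest A) :: Γ) ((α₁ + α₂, δ) : Multiset (Obs A) × ObsCtx Γ)) =
      fg (ms ((x₁, Form.quest A) :: (x₂, Form.quest A) :: Γ)
        ((α₁, (α₂, δ)) : Multiset (Obs A) × (Multiset (Obs A) × ObsCtx Γ))) := by
      simp only [ms, fg_cons, emb_quest, Multiset.map_add, ← add_assoc, Prod.mk_add_mk, add_zero]
    rw [e]
    exact ih
  | cut => trivial
  | mix2 h1 h2 ih1 ih2 => exact ⟨_, _, ih1, ih2, by simp only [ms_app, fg_add]⟩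
  | exch h hp ih => rw [← hp.ms_eq]; exact ih

theorem DenM.ns {P : Proc} {M : Multiset Entry} (h : DenM P M) : NS P (fg M) := by
  obtain ⟨Γ, o, rfl, h⟩ := h
  exact den_NS h

/-! ### Duality on pairs -/

/-- Dual of a pair of a formula and an observation. -/
def dsig (s : Sg) : Sg := ⟨s.1.dual, dualObs s.1 s.2⟩

theorem dual_dual (A : Form) : A.dual.dual = A := by
  induction A <;> simp_all [Form.dual]


theorem key_pair {A B A' B' : Form} {a : Obs A} {b : Obs B} {a' : Obs A'} {b' : Obs B'}
    (h1 : (⟨A', a'⟩ : Sg) = ⟨A, a⟩) (h2 : (⟨B', b'⟩ : Sg) = ⟨B, b⟩) :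
    (⟨.tensor A' B', (a', b')⟩ : Sg) = ⟨.tensor A B, (a, b)⟩ ∧
    (⟨.parr A' B', (a', b')⟩ : Sg) = ⟨.parr A B, (a, b)⟩ := by
  cases h1; cases h2; exact ⟨rfl, rfl⟩

theorem key_inl {A B A' B' : Form} {a : Obs A} {a' : Obs A'}
    (h1 : (⟨A', a'⟩ : Sg) = ⟨A, a⟩) (h2 : B' = B) :
    (⟨.oplus A' B', Sum.inl a'⟩ : Sg) = ⟨.oplus A B, Sum.inl a⟩ ∧
    (⟨.wth A' B', Sum.inl a'⟩ : Sg) = ⟨.wth A B, Sum.inl a⟩ := by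
  cases h1; cases h2; exact ⟨rfl, rfl⟩

theorem key_inr {A B A' B' : Form} {b : Obs B} {b' : Obs B'}
    (h1 : (⟨B', b'⟩ : Sg) = ⟨B, b⟩) (h2 : A' = A) :
    (⟨.oplus A' B', Sum.inr b'⟩ : Sg) = ⟨.oplus A B, Sum.inr b⟩ ∧
    (⟨.wth A' B', Sum.inr b'⟩ : Sg) = ⟨.wth A B, Sum.inr b⟩ := by
  cases h1; cases h2; exact ⟨rfl, rfl⟩

theorem dsig_dsig (s : Sg) : dsig (dsig s) = s := by
  obtain ⟨A, a⟩ := s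
  simp only [dsig]
  induction A with
  | one => rfl
  | bot => rfl
  | tensor A B ihA ihB => exact (key_pair (ihA a.1) (ihB a.2)).1
  | parr A B ihA ihB => exact (key_pair (ihA a.1) (ihB a.2)).2
  | oplus A B ihA ihB =>
    rcases a with a | b
    · exact (key_inl (ihA a) (dual_dual B)).1
    · exact (key_inr (ihB b) (dual_dual A)).1
  | wth A B ihA ihB =>
    rcases a with a | b
    · exact (key_inl (ihA a) (dual_dual B)).2
    · exact (key_inr (ihB b) (dual_dual A)).2
  | bang A ih | quest A ih =>
    have hA := dual_dual A
    have key : ∀ (A' : Form) (e : Obs A → Obs A'), A' = A → (∀ a, (⟨A', e a⟩ : Sg) = ⟨A, a⟩) →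
        (⟨A'.bang, Multiset.map e a⟩ : Sg) = ⟨A.bang, a⟩ ∧
        (⟨A'.quest, Multiset.map e a⟩ : Sg) = ⟨A.quest, a⟩ := by
      intro A' e h he
      subst h
      have : e = id := by
        funext a
        have := he a
        simpa using this
      subst this
      simp
    have := key A.dual.dual (fun a => dualObs A.dual (dualObs A a)) hA ih
    have h3 : Multiset.map (dualObs A.dual) (Multiset.map (dualObs A) a) =
        Multiset.map (fun a => dualObs A.dual (dualObs A a)) a := by
      simp [Multiset.map_map, Function.comp_def]
    simp only [Form.dual, dualObs, msCongr, Equiv.coe_fn_mk]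
    first
      | exact (congrArg _ h3).trans this.1
      | exact (congrArg _ h3).trans this.2

/-- Size of a formula. -/
def Form.size : Form → ℕ
  | .one => 1
  | .bot => 1
  | .tensor A B => A.size + B.size + 1
  | .parr A B => A.size + B.size + 1
  | .oplus A B => A.size + B.size + 1
  | .wth A B => A.size + B.size + 1
  | .bang A => A.size + 1
  | .quest A => A.size + 1

theorem size_dual (A : Form) : A.dual.size = A.size := by
  induction A <;> simp_all [Form.dual, Form.size]



/-! ### Named inversion as equivalences -/

theorem NoQ.cons {x A a M} (h : ¬ isQ A) (hM : NoQ M) : NoQ (ent x A a ::ₘ M) := by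
  intro e he
  rcases Multiset.mem_cons.1 he with rfl | he
  · exact h
  · exact hM e he

theorem NoQ.zero : NoQ 0 := by intro e he; simp at he

theorem NoQ.single {x A a} (h : ¬ isQ A) : NoQ {ent x A a} := NoQ.cons h NoQ.zero

/-- The name does not occur. -/
def Fr (x : ℕ) (M : Multiset Entry) : Prop := ∀ e ∈ M, e.1 ≠ x

theorem Fr.cons {x y : ℕ} {A a M} (h : y ≠ x) (hM : Fr x M) : Fr x (ent y A a ::ₘ M) := by
  intro e he
  rcases Multiset.mem_cons.1 he with rfl | he
  · exact h
  · exact hM e he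

theorem Fr.zero {x} : Fr x 0 := by intro e he; simp at he

theorem Fr.single {x y : ℕ} {A a} (h : y ≠ x) : Fr x {ent y A a} := Fr.cons h Fr.zero

theorem inp_iff {x y P A B M} {p : Obs A × Obs B} (hx : Fr x M) (hn : NoQ M) :
    DenM (.inp x y P) (ent x (.parr A B) p ::ₘ M) ↔ DenM P (ent y A p.1 ::ₘ ent x B p.2 ::ₘ M) := by
  constructor
  · intro h
    obtain ⟨A', B', a, b, M', e, h'⟩ := h.inv (NoQ.cons (fun h => h) hn)
    obtain ⟨e1, rfl⟩ := resolve e.symm hx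
    cases e1
    exact h'
  · intro h; exact DenM.inp h

theorem parclose_iff {x P M} {u : Unit} (hx : Fr x M) (hn : NoQ M) :
    DenM (.par (.close x) P) (ent x .one u ::ₘ M) ↔ DenM P M := by
  constructor
  · intro h
    obtain ⟨M₁, M₂, e, h1, h2⟩ := h.inv (NoQ.cons (fun h => h) hn)
    have hn' := NoQ.cons (x := x) (A := .one) (a := u) (fun h => h) hn
    have h1' : M₁ = {ent x .one ()} := h1.inv (fun e' he' => hn' e' (by rw [e]; exact Multiset.mem_add.2 (Or.inl he')))
    subst h1'
    rw [Multiset.singleton_add] at e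
    obtain ⟨_, rfl⟩ := resolve e.symm hx
    exact h2
  · intro h; exact DenM.par DenM.close h

theorem wait_iff {x P M} {u : Unit} (hx : Fr x M) (hn : NoQ M) :
    DenM (.wait x P) (ent x .bot u ::ₘ M) ↔ DenM P M := by
  constructor
  · intro h
    obtain ⟨M', e, h1⟩ := h.inv (NoQ.cons (fun h => h) hn)
    obtain ⟨_, rfl⟩ := resolve e.symm hx
    exact h1
  · intro h; exact DenM.wait h

theorem waitnil_eq {x M} {u : Unit} (hx : Fr x M) (hn : NoQ M) :
    DenM (.wait x .nil) (ent x .bot u ::ₘ M) ↔ M = 0 := by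
  rw [wait_iff hx hn]
  constructor
  · intro h; exact h.inv hn
  · rintro rfl; exact DenM.nil

theorem selL_iff {x P A B M} {p : Obs A ⊕ Obs B} (hx : Fr x M) (hn : NoQ M) :
    DenM (.sel x false P) (ent x (.oplus A B) p ::ₘ M) ↔ ∃ a, p = Sum.inl a ∧ DenM P (ent x A a ::ₘ M) := by
  constructor
  · intro h
    obtain ⟨A', B', a, M', e, h'⟩ := h.inv (NoQ.cons (fun h => h) hn)
    obtain ⟨e1, rfl⟩ := resolve e.symm hx
    cases e1
    exact ⟨a, rfl, h'⟩
  · rintro ⟨a, rfl, h⟩; exact DenM.selL h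

theorem selR_iff {x P A B M} {p : Obs A ⊕ Obs B} (hx : Fr x M) (hn : NoQ M) :
    DenM (.sel x true P) (ent x (.oplus A B) p ::ₘ M) ↔ ∃ a, p = Sum.inr a ∧ DenM P (ent x B a ::ₘ M) := by
  constructor
  · intro h
    obtain ⟨A', B', a, M', e, h'⟩ := h.inv (NoQ.cons (fun h => h) hn)
    obtain ⟨e1, rfl⟩ := resolve e.symm hx
    cases e1
    exact ⟨a, rfl, h'⟩
  · rintro ⟨a, rfl, h⟩; exact DenM.selR h

theorem cas_iff {x P Q A B M} {p : Obs A ⊕ Obs B} (hx : Fr x M) (hn : NoQ M)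
    (hP : TyM P ((x, A) ::ₘ M.map tyOf)) (hQ : TyM Q ((x, B) ::ₘ M.map tyOf)) :
    DenM (.cas x P Q) (ent x (.wth A B) p ::ₘ M) ↔
      (∃ a, p = Sum.inl a ∧ DenM P (ent x A a ::ₘ M)) ∨
      (∃ b, p = Sum.inr b ∧ DenM Q (ent x B b ::ₘ M)) := by
  constructor
  · intro h
    obtain ⟨A', B', M', ⟨a, e, h'⟩ | ⟨a, e, h'⟩⟩ := h.inv (NoQ.cons (fun h => h) hn)
    · obtain ⟨e1, rfl⟩ := resolve e.symm hx
      cases e1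
      exact Or.inl ⟨a, rfl, h'⟩
    · obtain ⟨e1, rfl⟩ := resolve e.symm hx
      cases e1
      exact Or.inr ⟨a, rfl, h'⟩
  · rintro (⟨a, rfl, h⟩ | ⟨a, rfl, h⟩)
    · exact DenM.casL h hQ
    · exact DenM.casR hP h

theorem out_iff {x y P Q A B M} {p : Obs A × Obs B} (hx : Fr x M) (hn : NoQ M) :
    DenM (.out x y P Q) (ent x (.tensor A B) p ::ₘ M) ↔
      ∃ M₁ M₂, M = M₁ + M₂ ∧ DenM P (ent y A p.1 ::ₘ M₁) ∧ DenM Q (ent x B p.2 ::ₘ M₂) := by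
  constructor
  · intro h
    obtain ⟨A', B', a, b, M₁, M₂, e, h1, h2⟩ := h.inv (NoQ.cons (fun h => h) hn)
    obtain ⟨e1, rfl⟩ := resolve e.symm hx
    cases e1
    exact ⟨_, _, rfl, h1, h2⟩
  · rintro ⟨M₁, M₂, rfl, h1, h2⟩; exact DenM.out h1 h2

/-- Unpacking a pair with `⊥`. -/
def gad (q r : Name) (S : Proc) : Proc := .out q r S (.wait q .nil)

theorem TyM.gad {q r S P M} (h : TyM S ((r, P) ::ₘ M)) :
    TyM (gad q r S) ((q, .tensor P .bot) ::ₘ M) := by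
  have := TyM.out (x := q) h (TyM.wait TyM.nil)
  simp only [Multiset.add_zero] at this
  exact this

theorem TyM.parclose {x P M} (h : TyM P M) : TyM (.par (.close x) P) ((x, .one) ::ₘ M) :=
  TyM.par TyM.close h

theorem DenM.parclose {x P M} {u : Unit} (h : DenM P M) :
    DenM (.par (.close x) P) (ent x .one u ::ₘ M) :=
  DenM.par DenM.close h

theorem pc {α : Type} (a b : α) : a ::ₘ {b} = b ::ₘ ({a} : Multiset α) :=
  Multiset.pair_comm _ _

theorem rot3 {α : Type} (a b c : α) : a ::ₘ b ::ₘ {c} = c ::ₘ a ::ₘ ({b} : Multiset α) := by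
  rw [Multiset.cons_swap c a]
  congr 1
  exact Multiset.pair_comm _ _

theorem gad_iff {q r S P M} {p : Obs P × Unit} (hx : Fr q M) (hn : NoQ M) :
    DenM (gad q r S) (ent q (.tensor P .bot) p ::ₘ M) ↔ DenM S (ent r P p.1 ::ₘ M) := by
  unfold gad
  rw [out_iff hx hn]
  constructor
  · rintro ⟨M₁, M₂, rfl, h1, h2⟩
    rw [waitnil_eq (fun e he => hx e (Multiset.mem_add.2 (Or.inr he)))
      (fun e he => hn e (Multiset.mem_add.2 (Or.inr he)))] at h2
    subst h2
    simpa using h1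
  · intro h
    refine ⟨M, 0, by simp, h, ?_⟩
    rw [waitnil_eq Fr.zero NoQ.zero]

theorem gad_mem {q r S M} (hn : NoQ M) (h : DenM (gad q r S) M) : ∃ e ∈ M, e.1 = q := by
  obtain ⟨A', B', a, b, M₁, M₂, rfl, h1, h2⟩ := h.inv hn
  exact ⟨_, Multiset.mem_cons_self _ _, rfl⟩

theorem split2 {E' E : Entry} {M₁ M₂ : Multiset Entry} (h : E' ::ₘ {E} = M₁ + M₂) (hne : E'.1 ≠ E.1)
    (h1 : ∃ e ∈ M₁, e.1 = E'.1) (h2 : ∃ e ∈ M₂, e.1 = E.1) : M₁ = {E'} ∧ M₂ = {E} := by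
  obtain ⟨e1, h1, n1⟩ := h1
  obtain ⟨e2, h2, n2⟩ := h2
  have m1 : e1 ∈ E' ::ₘ {E} := by rw [h]; exact Multiset.mem_add.2 (Or.inl h1)
  have m2 : e2 ∈ E' ::ₘ {E} := by rw [h]; exact Multiset.mem_add.2 (Or.inr h2)
  simp only [Multiset.mem_cons, Multiset.mem_singleton] at m1 m2
  have : e1 = E' := by
    rcases m1 with rfl | rfl
    · rfl
    · exact absurd n1.symm hne
  have : e2 = E := by
    rcases m2 with rfl | rfl
    · exact absurd n2 hne
    · rfl
  subst e1 e2
  obtain ⟨N1, rfl⟩ := Multiset.exists_cons_of_mem h1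
  obtain ⟨N2, rfl⟩ := Multiset.exists_cons_of_mem h2
  have hc := congrArg Multiset.card h
  simp only [Multiset.card_cons, Multiset.card_singleton, Multiset.card_add] at hc
  have : N1 = 0 := by rw [← Multiset.card_eq_zero]; omega
  have : N2 = 0 := by rw [← Multiset.card_eq_zero]; omega
  subst N1 N2
  exact ⟨rfl, rfl⟩

/-! ### Realizability of relations by processes on two names -/

/-- The relation `R` is the denotation of a process on two given names. -/
def Real (P W : Form) (R : Obs P → Obs W → Prop) : Prop :=
  ∀ x y : ℕ, x ≠ y → ∃ S, TyM S {(x, P), (y, W)} ∧ ∀ p w, DenM S {ent x P p, ent y W w} ↔ R p w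

theorem Real.symm {P W R} (h : Real P W R) : Real W P (fun w p => R p w) := by
  intro x y hxy
  obtain ⟨S, h1, h2⟩ := h y x hxy.symm
  refine ⟨S, ?_, ?_⟩
  · rw [Multiset.pair_comm]; exact h1
  · intro p w
    rw [Multiset.pair_comm]; exact h2 w p

theorem Real.congr {P W R R'} (h : Real P W R) (hR : ∀ p w, R p w ↔ R' p w) : Real P W R' := by
  intro x y hxy
  obtain ⟨S, h1, h2⟩ := h x y hxy
  exact ⟨S, h1, fun p w => (h2 p w).trans (hR p w)⟩

theorem nqOne : ¬ isQ .one := fun h => h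
theorem nqBot : ¬ isQ .bot := fun h => h
theorem nqTensor {A B} : ¬ isQ (.tensor A B) := fun h => h
theorem nqParr {A B} : ¬ isQ (.parr A B) := fun h => h
theorem nqOplus {A B} : ¬ isQ (.oplus A B) := fun h => h
theorem nqWth {A B} : ¬ isQ (.wth A B) := fun h => h
theorem nqBang {A} : ¬ isQ (.bang A) := fun h => h

theorem real_one : Real (.parr .bot .one) .one (fun _ _ => True) := by
  intro x y hxy
  obtain ⟨k, hk⟩ : ∃ k : ℕ, k = x + y + 1 := ⟨_, rfl⟩
  refine ⟨.inp x k (.par (.close x) (.wait k (.close y))), ?_, ?_⟩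
  · refine TyM.inp ?_
    rw [Multiset.cons_swap]
    exact TyM.par TyM.close (TyM.wait TyM.close)
  · intro p w
    simp only [iff_true]
    refine DenM.inp (A := .bot) (B := .one) (a := ()) (b := ()) ?_
    rw [Multiset.cons_swap]
    exact DenM.par DenM.close (DenM.wait DenM.close)

theorem real_tensor {P₁ W₁ R₁ P₂ W₂ R₂} (h₁ : Real P₁ W₁ R₁) (h₂ : Real P₂ W₂ R₂)
    (n₁ : ¬ isQ W₁) (n₂ : ¬ isQ W₂) :
    Real (.parr (.parr (.tensor P₁ .bot) (.tensor P₂ .bot)) .one) (.tensor W₁ W₂)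
      (fun p w => R₁ p.1.1.1 w.1 ∧ R₂ p.1.2.1 w.2) := by
  intro x y hxy
  obtain ⟨q, hq⟩ : ∃ k : ℕ, k = x + y + 1 := ⟨_, rfl⟩
  obtain ⟨q', hq'⟩ : ∃ k : ℕ, k = x + y + 2 := ⟨_, rfl⟩
  obtain ⟨y', hy'⟩ : ∃ k : ℕ, k = x + y + 3 := ⟨_, rfl⟩
  obtain ⟨r, hr⟩ : ∃ k : ℕ, k = x + y + 4 := ⟨_, rfl⟩
  obtain ⟨S₁, t₁, d₁⟩ := h₁ r y' (by omega)
  obtain ⟨S₂, t₂, d₂⟩ := h₂ r y (by omega)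
  refine ⟨.inp x q (.par (.close x) (.inp q q' (.out y y' (gad q' r S₁) (gad q r S₂)))), ?_, ?_⟩
  · refine TyM.inp ?_
    rw [Multiset.cons_swap]
    refine TyM.parclose (TyM.inp ?_)
    have g₁ := TyM.gad (q := q') t₁
    have g₂ := TyM.gad (q := q) t₂
    rw [pc] at g₁ g₂
    have := TyM.out g₁ g₂
    rw [rot3]
    exact this
  · intro p w
    have e : ({ent x (.parr (.parr (.tensor P₁ .bot) (.tensor P₂ .bot)) .one) p, ent y (.tensor W₁ W₂) w} : Multiset Entry)
      = ent x (.parr (.parr (.tensor P₁ .bot) (.tensor P₂ .bot)) .one) p ::ₘ {ent y (.tensor W₁ W₂) w} := rfl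
    rw [e, inp_iff (Fr.single (by omega)) (NoQ.single nqTensor), Multiset.cons_swap,
      parclose_iff (Fr.cons (by omega) (Fr.single (by omega))) (NoQ.cons nqParr (NoQ.single nqTensor)),
      inp_iff (Fr.single (by omega)) (NoQ.single nqTensor)]
    show _ ↔ R₁ p.1.1.1 w.1 ∧ R₂ p.1.2.1 w.2
    rw [rot3, out_iff (Fr.cons (by omega) (Fr.single (by omega))) (NoQ.cons nqTensor (NoQ.single nqTensor)),
      ← d₁, ← d₂]
    constructor
    · rintro ⟨M₁, M₂, hM, g₁, g₂⟩
      have hn : NoQ (M₁ + M₂) := by rw [← hM]; exact NoQ.cons nqTensor (NoQ.single nqTensor)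
      obtain ⟨rfl, rfl⟩ := split2 hM (by show (q' : ℕ) ≠ q; omega) (by
          obtain ⟨e, he, h⟩ := gad_mem (NoQ.cons n₁ (fun e he => hn e (Multiset.mem_add.2 (Or.inl he)))) g₁
          rcases Multiset.mem_cons.1 he with rfl | he
          · change (y' : ℕ) = q' at h; omega
          · exact ⟨e, he, h⟩) (by
          obtain ⟨e, he, h⟩ := gad_mem (NoQ.cons n₂ (fun e he => hn e (Multiset.mem_add.2 (Or.inr he)))) g₂
          rcases Multiset.mem_cons.1 he with rfl | he
          · change (y : ℕ) = q at h; omega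
          · exact ⟨e, he, h⟩)
      rw [pc] at g₁ g₂
      exact ⟨(gad_iff (Fr.single (by omega)) (NoQ.single n₁)).1 g₁,
        (gad_iff (Fr.single (by omega)) (NoQ.single n₂)).1 g₂⟩
    · rintro ⟨g₁, g₂⟩
      refine ⟨{_}, {_}, rfl, ?_, ?_⟩
      · rw [pc]
        exact (gad_iff (Fr.single (by omega)) (NoQ.single n₁)).2 g₁
      · rw [pc]
        exact (gad_iff (Fr.single (by omega)) (NoQ.single n₂)).2 g₂

theorem real_oplus {P₁ W₁ R₁ P₂ W₂ R₂} (h₁ : Real P₁ W₁ R₁) (h₂ : Real P₂ W₂ R₂)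
    (n₁ : ¬ isQ W₁) (n₂ : ¬ isQ W₂) :
    Real (.parr (.wth (.tensor P₁ .bot) (.tensor P₂ .bot)) .one) (.oplus W₁ W₂)
      (fun p w => (∃ p' w', p.1 = Sum.inl p' ∧ w = Sum.inl w' ∧ R₁ p'.1 w') ∨
        (∃ p' w', p.1 = Sum.inr p' ∧ w = Sum.inr w' ∧ R₂ p'.1 w')) := by
  intro x y hxy
  obtain ⟨q, hq⟩ : ∃ k : ℕ, k = x + y + 1 := ⟨_, rfl⟩
  obtain ⟨r, hr⟩ : ∃ k : ℕ, k = x + y + 4 := ⟨_, rfl⟩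
  obtain ⟨S₁, t₁, d₁⟩ := h₁ r y (by omega)
  obtain ⟨S₂, t₂, d₂⟩ := h₂ r y (by omega)
  have T₁ : TyM (.sel y false (gad q r S₁)) {(q, .tensor P₁ .bot), (y, .oplus W₁ W₂)} := by
    have g₁ := TyM.gad (q := q) t₁
    rw [pc] at g₁
    rw [Multiset.pair_comm]
    exact TyM.selL g₁
  have T₂ : TyM (.sel y true (gad q r S₂)) {(q, .tensor P₂ .bot), (y, .oplus W₁ W₂)} := by
    have g₁ := TyM.gad (q := q) t₂
    rw [pc] at g₁
    rw [Multiset.pair_comm]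
    exact TyM.selR g₁
  refine ⟨.inp x q (.par (.close x) (.cas q (.sel y false (gad q r S₁)) (.sel y true (gad q r S₂)))),
    ?_, ?_⟩
  · refine TyM.inp ?_
    rw [Multiset.cons_swap]
    exact TyM.parclose (TyM.cas T₁ T₂)
  · intro p w
    have e : ({ent x (.parr (.wth (.tensor P₁ .bot) (.tensor P₂ .bot)) .one) p,
        ent y (.oplus W₁ W₂) w} : Multiset Entry)
      = ent x (.parr (.wth (.tensor P₁ .bot) (.tensor P₂ .bot)) .one) p ::ₘ
        {ent y (.oplus W₁ W₂) w} := rfl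
    rw [e, inp_iff (Fr.single (by omega)) (NoQ.single nqOplus), Multiset.cons_swap,
      parclose_iff (Fr.cons (by omega) (Fr.single (by omega))) (NoQ.cons nqWth (NoQ.single nqOplus)),
      cas_iff (Fr.single (by omega)) (NoQ.single nqOplus) (by simpa [ent, tyOf] using T₁)
        (by simpa [ent, tyOf] using T₂)]
    refine or_congr ?_ ?_
    · refine exists_congr fun p' => ?_
      constructor
      · rintro ⟨h, h'⟩
        rw [pc, selL_iff (Fr.single (by omega)) (NoQ.single nqTensor)] at h'
        obtain ⟨w', rfl, h'⟩ := h'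
        rw [pc, gad_iff (Fr.single (by omega)) (NoQ.single n₁)] at h'
        exact ⟨w', h, rfl, (d₁ _ _).1 h'⟩
      · rintro ⟨w', h, rfl, h'⟩
        refine ⟨h, ?_⟩
        rw [pc, selL_iff (Fr.single (by omega)) (NoQ.single nqTensor)]
        refine ⟨w', rfl, ?_⟩
        rw [pc, gad_iff (Fr.single (by omega)) (NoQ.single n₁)]
        exact (d₁ _ _).2 h'
    · refine exists_congr fun p' => ?_
      constructor
      · rintro ⟨h, h'⟩
        rw [pc, selR_iff (Fr.single (by omega)) (NoQ.single nqTensor)] at h'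
        obtain ⟨w', rfl, h'⟩ := h'
        rw [pc, gad_iff (Fr.single (by omega)) (NoQ.single n₂)] at h'
        exact ⟨w', h, rfl, (d₂ _ _).1 h'⟩
      · rintro ⟨w', h, rfl, h'⟩
        refine ⟨h, ?_⟩
        rw [pc, selR_iff (Fr.single (by omega)) (NoQ.single nqTensor)]
        refine ⟨w', rfl, ?_⟩
        rw [pc, gad_iff (Fr.single (by omega)) (NoQ.single n₂)]
        exact (d₂ _ _).2 h'



/-! ### The exponential case: the processes and completeness -/

theorem TyM.client {x y P A M} (h : TyM P ((y, A) ::ₘ M)) :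
    TyM (.client x y P) ((x, .quest A) ::ₘ M) := by
  obtain ⟨Γ, rfl⟩ := exists_list M
  rw [Multiset.cons_coe, tyM_iff] at h
  exact ⟨_ :: Γ, rfl, .client x y h⟩

theorem DenM.client {x y P A a M} (h : DenM P (ent y A a ::ₘ M)) :
    DenM (.client x y P) (ent x (.quest A) ({a} : Multiset (Obs A)) ::ₘ M) := by
  obtain ⟨Γ, o, rfl⟩ := exists_ms M
  have h1 : Den P ((y, A) :: Γ) (a, o) := denM_iff.1 h
  exact ⟨_, _, rfl, .client x y h1⟩

theorem TyM.fwd {x y A} : TyM (.fwd x y) ((x, A) ::ₘ {(y, A.dual)}) := ⟨_, rfl, .fwd x y A⟩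

theorem DenM.fwd {x y A a} : DenM (.fwd x y) (ent x A a ::ₘ {ent y A.dual (dualObs A a)}) :=
  ⟨_, _, rfl, .fwd x y A a⟩

/-- The body of the package server. -/
def bodyP (m' a b t r : Name) (S : Proc) : Proc :=
  .inp m' a (.inp m' b (.par (.close m') (gad b t (gad a r S))))

/-- The body of the dispatching server. -/
def bodyG (m v₀ v c a' u : Name) : Proc :=
  .client m c (.client v₀ u (.out c a' (.fwd u a') (.fwd v c)))

/-- The dispatcher. -/
def dispF (x y m v₀ v c a' u : Name) : Proc :=
  .inp x v₀ (.par (.close x) (.server y v (bodyG m v₀ v c a' u)))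

section
variable {P W : Form} {R : Obs P → Obs W → Prop}

theorem bodyP_ty {m' a b t r : ℕ} {S : Proc} (h : TyM S {(r, P), (t, W)}) :
    TyM (bodyP m' a b t r S)
      {(m', .parr (.tensor P .bot) (.parr (.tensor W .bot) .one))} := by
  refine TyM.inp ?_
  rw [Multiset.cons_swap]
  refine TyM.inp ?_
  rw [Multiset.cons_swap]
  refine TyM.parclose ?_
  refine TyM.gad ?_
  rw [Multiset.cons_swap]
  exact TyM.gad h

theorem bodyP_den {m' a b t r : ℕ} {S : Proc} (h1 : m' ≠ a) (h2 : m' ≠ b) (h3 : a ≠ b) (h4 : a ≠ t)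
    (nW : ¬ isQ W)
    (h : ∀ p w, DenM S {ent r P p, ent t W w} ↔ R p w)
    (e : (Obs P × Unit) × ((Obs W × Unit) × Unit)) :
    DenM (bodyP m' a b t r S)
      {ent m' (.parr (.tensor P .bot) (.parr (.tensor W .bot) .one)) e} ↔ R e.1.1 e.2.1.1 := by
  have e0 : ({ent m' (.parr (.tensor P .bot) (.parr (.tensor W .bot) .one)) e} : Multiset Entry)
    = ent m' (.parr (.tensor P .bot) (.parr (.tensor W .bot) .one)) e ::ₘ 0 := rfl
  have e1 : ∀ E : Entry, E ::ₘ 0 = {E} := fun _ => rfl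
  rw [e0, bodyP, inp_iff Fr.zero NoQ.zero, e1, pc,
    inp_iff (Fr.single (by omega)) (NoQ.single nqTensor), Multiset.cons_swap,
    parclose_iff (Fr.cons (by omega) (Fr.single (by omega))) (NoQ.cons nqTensor (NoQ.single nqTensor)),
    gad_iff (Fr.single (by omega)) (NoQ.single nqTensor), pc,
    gad_iff (Fr.single (by omega)) (NoQ.single nW)]
  exact h _ _

theorem bodyG_ty {m v₀ v c a' u : Name} {X Y : Form} :
    TyM (bodyG m v₀ v c a' u)
      ((v, Y) ::ₘ (m, .quest (.tensor X.dual Y.dual)) ::ₘ {(v₀, .quest X)}) := by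
  rw [Multiset.cons_swap]
  refine TyM.client ?_
  rw [rot3]
  refine TyM.client ?_
  rw [Multiset.cons_swap]
  have h1 := TyM.fwd (x := u) (y := a') (A := X)
  have h2 := TyM.fwd (x := v) (y := c) (A := Y)
  rw [pc] at h1 h2
  exact TyM.out h1 h2

theorem bodyG_den {m v₀ v c a' u : Name} {X Y : Form} (p : Obs X) (y : Obs Y) :
    DenM (bodyG m v₀ v c a' u)
      (ent v Y y ::ₘ ent m (.quest (.tensor X.dual Y.dual))
        ({(dualObs X p, dualObs Y y)} : Multiset (Obs X.dual × Obs Y.dual)) ::ₘ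
        {ent v₀ (.quest X) ({p} : Multiset (Obs X))}) := by
  rw [Multiset.cons_swap]
  refine DenM.client (A := .tensor X.dual Y.dual) ?_
  rw [rot3]
  refine DenM.client ?_
  rw [Multiset.cons_swap]
  have h1 := DenM.fwd (x := u) (y := a') (A := X) (a := p)
  have h2 := DenM.fwd (x := v) (y := c) (A := Y) (a := y)
  rw [pc] at h1 h2
  exact DenM.out h1 h2

theorem dispF_ty {x y m v₀ v c a' u : Name} {X Y : Form} :
    TyM (dispF x y m v₀ v c a' u)
      ((m, .quest (.tensor X.dual Y.dual)) ::ₘ {(x, .parr (.quest X) .one), (y, .bang Y)}) := by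
  rw [Multiset.insert_eq_cons, Multiset.cons_swap]
  refine TyM.inp ?_
  rw [Multiset.cons_swap]
  refine TyM.parclose ?_
  have h : Types (bodyG m v₀ v c a' u) ((v, Y) :: QCtx [(m, .tensor X.dual Y.dual), (v₀, X)]) :=
    tyM_iff.1 bodyG_ty
  have := tyM_iff.2 (Types.server y v h)
  have e : (v₀, X.quest) ::ₘ (m, (X.dual.tensor Y.dual).quest) ::ₘ {(y, Y.bang)} =
    (y, Y.bang) ::ₘ (m, (X.dual.tensor Y.dual).quest) ::ₘ {(v₀, X.quest)} := by
    rw [rot3, pc (v₀, _)]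
  rw [e]
  exact this

/-- An observation of the `?`-context of the dispatcher. -/
def mkO (m v₀ : Name) (X D : Form) (α : Multiset (Obs D)) (β : Multiset (Obs X)) :
    ObsCtx (QCtx [(m, D), (v₀, X)]) := (α, (β, ()))

theorem qAdd_mkO (m v₀ : Name) (X D : Form) (α α' : Multiset (Obs D)) (β β' : Multiset (Obs X)) :
    qAdd [(m, D), (v₀, X)] (mkO m v₀ X D α β) (mkO m v₀ X D α' β') =
      mkO m v₀ X D (α + α') (β + β') := rfl

theorem qSum_mkO {ι : Type} (m v₀ : Name) (X D : Form) (f : ι → Obs D) (g : ι → Obs X) (L : List ι) :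
    qSum [(m, D), (v₀, X)] (L.map fun e => mkO m v₀ X D {f e} {g e}) =
      mkO m v₀ X D ↑(L.map f) ↑(L.map g) := by
  induction L with
  | nil => rfl
  | cons e L ih =>
    have : qSum [(m, D), (v₀, X)] ((e :: L).map fun e => mkO m v₀ X D {f e} {g e}) =
      qAdd _ (mkO m v₀ X D {f e} {g e})
        (qSum [(m, D), (v₀, X)] (L.map fun e => mkO m v₀ X D {f e} {g e})) := rfl
    rw [this, ih, qAdd_mkO]
    rfl

theorem dispF_den {x y m v₀ v c a' u : Name} {X Y : Form} (L : List (Obs X × Obs Y)) (un : Unit) :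
    DenM (dispF x y m v₀ v c a' u)
      (ent m (.quest (.tensor X.dual Y.dual))
        (↑(L.map fun e => (dualObs X e.1, dualObs Y e.2)) : Multiset (Obs X.dual × Obs Y.dual)) ::ₘ
      {ent x (.parr (.quest X) .one) ((↑(L.map Prod.fst) : Multiset (Obs X)), un),
        ent y (.bang Y) (↑(L.map Prod.snd) : Multiset (Obs Y))}) := by
  have h : Types (bodyG m v₀ v c a' u) ((v, Y) :: QCtx [(m, .tensor X.dual Y.dual), (v₀, X)]) :=
    tyM_iff.1 bodyG_ty
  have h2 := Den.server (Θ := [(m, .tensor X.dual Y.dual), (v₀, X)]) y v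
    (L.map fun e => (e.2, mkO m v₀ X (.tensor X.dual Y.dual) {(dualObs X e.1, dualObs Y e.2)} {e.1})) h (by
      intro r hr
      obtain ⟨e, _, rfl⟩ := List.mem_map.1 hr
      refine (denM_iff (Γ := (v, Y) :: QCtx [(m, .tensor X.dual Y.dual), (v₀, X)])).1 ?_
      exact bodyG_den e.1 e.2)
  have h4 := (denM_iff (Γ := (y, .bang Y) :: QCtx [(m, .tensor X.dual Y.dual), (v₀, X)])).2 h2
  rw [List.map_map, List.map_map, Function.comp_def, Function.comp_def] at h4
  simp only [qSum_mkO] at h4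
  rw [Multiset.insert_eq_cons, Multiset.cons_swap]
  refine DenM.inp ?_
  rw [Multiset.cons_swap]
  refine DenM.parclose ?_
  rw [rot3, pc (ent v₀ _ _)]
  exact h4

theorem pack_den {m m' : Name} {B : Proc} {E : Form} (ht : TyM B {(m', E)}) (L : List (Obs E))
    (h : ∀ e ∈ L, DenM B {ent m' E e}) :
    DenM (.server m m' B) {ent m (.bang E) (↑L : Multiset (Obs E))} := by
  have ht' : Types B ((m', E) :: QCtx []) := tyM_iff.1 ht
  have := Den.server (Θ := []) m m' (L.map fun e => (e, qZero [])) ht' (by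
      intro r hr
      obtain ⟨e, he, rfl⟩ := List.mem_map.1 hr
      exact (denM_iff (Γ := [(m', E)])).1 (h e he))
  have h2 := (denM_iff (Γ := (m, .bang E) :: QCtx [])).2 this
  rw [List.map_map, Function.comp_def, List.map_id'] at h2
  exact h2

end


/-! ### The exponential case: name-free analysis -/

theorem emb_lin_cases (A : Form) (a : Obs A) :
    (¬ isQ A ∧ emb A a = ({⟨A, a⟩}, 0)) ∨
    (∃ B m, (⟨A, a⟩ : Sg) = ⟨.quest B, m⟩ ∧ emb A a = (0, Multiset.map (fun b => (⟨B, b⟩ : Sg)) m)) := by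
  cases A with
  | quest B => exact Or.inr ⟨B, a, rfl, rfl⟩
  | _ => exact Or.inl ⟨fun h => h, rfl⟩

theorem bodyP_ns {m' a b t r : Name} {S : Proc} {A : Form} {e : Obs A} {q : Multiset Sg}
    (h : NS (bodyP m' a b t r S) (emb A e + (0, q))) :
    ∃ A₁ B₁, A = .parr A₁ B₁ ∧ ((∃ C D, A₁ = .parr C D) ∨ (∃ C D, B₁ = .parr C D)) := by
  obtain ⟨A₁, B₁, x, y, γ, ⟨A₂, B₂, x₂, y₂, γ₂, -, h2⟩, h1⟩ := h
  rw [emb_nq (A := .parr _ _) nqParr] at h1 h2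
  have h1' := congrArg Prod.fst h1
  have h2' := congrArg Prod.fst h2
  simp only [Prod.fst_add, add_zero] at h1' h2'
  have hA : γ.1 = 0 ∧ A = .parr A₁ B₁ := by
    rcases emb_lin_cases A e with ⟨_, h⟩ | ⟨B, m, _, h⟩
    · rw [h] at h1'
      simp only [Multiset.singleton_add] at h1'
      have hc := (Multiset.singleton_eq_cons_iff _).1 h1'
      exact ⟨hc.2, congrArg Sigma.fst hc.1⟩
    · rw [h] at h1'
      simp only [Multiset.singleton_add] at h1'
      exact absurd h1' Multiset.zero_ne_cons
  refine ⟨A₁, B₁, hA.2, ?_⟩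
  rw [hA.1, add_zero] at h2'
  have hm : (⟨.parr A₂ B₂, (x₂, y₂)⟩ : Sg) ∈ (emb A₁ x).1 + (emb B₁ y).1 := by
    rw [h2']; simp
  rcases Multiset.mem_add.1 hm with hm | hm
  · left
    rcases emb_lin_cases A₁ x with ⟨_, h⟩ | ⟨B, m, _, h⟩
    · rw [h] at hm
      exact ⟨A₂, B₂, (congrArg Sigma.fst (Multiset.mem_singleton.1 hm)).symm⟩
    · rw [h] at hm; simp at hm
  · right
    rcases emb_lin_cases B₁ y with ⟨_, h⟩ | ⟨B, m, _, h⟩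
    · rw [h] at hm
      exact ⟨A₂, B₂, (congrArg Sigma.fst (Multiset.mem_singleton.1 hm)).symm⟩
    · rw [h] at hm; simp at hm

theorem dispF_ns {x y m v₀ v c a' u : Name} {X B : Form} {α : Multiset (Obs X)} {un : Unit}
    {β : Multiset (Obs B)} {Q : Multiset Sg}
    (h : NS (dispF x y m v₀ v c a' u)
      (emb (.parr (.quest X) .one) (α, un) + (emb (.bang B) β + (0, Q)))) :
    ∃ runs : List (Obs B × Multiset Sg),
      (∀ r ∈ runs, NS (bodyG m v₀ v c a' u) (emb B r.1 + (0, r.2))) ∧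
      β = ↑(runs.map Prod.fst) ∧
      α.map (fun b => (⟨X, b⟩ : Sg)) + Q = (runs.map Prod.snd).sum := by
  obtain ⟨A₁, B₁, x, y, γ, ⟨u, v, hu, ⟨A₂, runs, hr, hv⟩, h2⟩, h1⟩ := h
  rw [emb_nq (A := .parr _ _) nqParr, emb_nq (A := .bang _) nqBang,
    emb_nq (A := .parr _ _) nqParr] at h1
  have hf := congrArg Prod.fst h1
  have hs := congrArg Prod.snd h1
  simp only [Prod.fst_add, Prod.snd_add, add_zero, zero_add, Multiset.singleton_add] at hf hs
  have hm : (⟨.parr A₁ B₁, (x, y)⟩ : Sg) ∈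
      (⟨.parr (.quest X) .one, (α, un)⟩ : Sg) ::ₘ {⟨.bang B, β⟩} := by rw [hf]; simp
  have hp : (⟨.parr A₁ B₁, (x, y)⟩ : Sg) = ⟨.parr (.quest X) .one, (α, un)⟩ := by
    rcases Multiset.mem_cons.1 hm with hm | hm
    · exact hm
    · have := congrArg Sigma.fst (Multiset.mem_singleton.1 hm)
      simp at this
  cases hp
  rw [Multiset.cons_inj_right] at hf
  have hγ : γ = ({⟨.bang B, β⟩}, Q) := Prod.ext hf.symm hs.symm
  subst hγ
  have hu' : u = emb .one () := hu
  subst hu'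
  subst hv
  rw [emb_nq (A := .bang _) nqBang, emb_nq (A := .one) nqOne, emb_quest] at h2
  have hf2 := congrArg Prod.fst h2
  have hs2 := congrArg Prod.snd h2
  simp only [Prod.fst_add, Prod.snd_add, add_zero, zero_add, Multiset.singleton_add] at hf2 hs2
  rw [Multiset.cons_inj_right, Multiset.singleton_inj] at hf2
  cases hf2
  exact ⟨runs, hr, rfl, hs2⟩

/-- Being a `!`-formula. -/
def isB : Form → Prop
  | .bang _ => True
  | _ => False

/-- States of forwarders. -/
def FW (t : St) : Prop := ∃ (A : Form) (a : Obs A), t = emb A a + emb A.dual (dualObs A a)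

theorem fw_lin {s : Sg} {δ : St} (hs : ¬ isB s.1) (h : FW ((({s} : Multiset Sg), (0 : Multiset Sg)) + δ)) :
    δ = ({dsig s}, 0) := by
  obtain ⟨A, a, h⟩ := h
  by_cases hq : isQ A
  · exfalso
    cases A with
    | quest B =>
      have hf := congrArg Prod.fst h
      have e : emb (Form.quest B).dual (dualObs (Form.quest B) a) =
        ({⟨.bang B.dual, dualObs (Form.quest B) a⟩}, 0) := rfl
      rw [emb_quest, e] at hf
      simp only [Prod.fst_add, zero_add, Multiset.singleton_add] at hf
      have := ((Multiset.singleton_eq_cons_iff _).1 hf.symm).1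
      exact hs (by rw [← this]; trivial)
    | _ => exact hq
  by_cases hb : isQ A.dual
  · exfalso
    cases A with
    | bang B =>
      have hf := congrArg Prod.fst h
      have e : emb (Form.bang B).dual (dualObs (Form.bang B) a) =
        (0, Multiset.map (fun b => (⟨B.dual, b⟩ : Sg)) (dualObs (Form.bang B) a)) := rfl
      rw [emb_nq nqBang, e] at hf
      simp only [Prod.fst_add, add_zero, Multiset.singleton_add] at hf
      have := ((Multiset.singleton_eq_cons_iff _).1 hf.symm).1
      exact hs (by rw [← this]; trivial)
    | _ => exact hb
  rw [emb_nq hq, emb_nq hb] at h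
  have hf := congrArg Prod.fst h
  have hs2 := congrArg Prod.snd h
  simp only [Prod.fst_add, Prod.snd_add, zero_add, Multiset.singleton_add] at hf hs2
  refine Prod.ext ?_ hs2
  have hm : s ∈ (⟨A, a⟩ : Sg) ::ₘ {⟨A.dual, dualObs A a⟩} := by rw [← hf]; simp
  rcases Multiset.mem_cons.1 hm with rfl | hm
  · rw [Multiset.cons_inj_right] at hf
    exact hf
  · have hm := Multiset.mem_singleton.1 hm
    subst hm
    rw [pc, Multiset.cons_inj_right] at hf
    rw [hf]
    exact congrArg _ (dsig_dsig ⟨A, a⟩).symm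

theorem pair_split {α : Type} {a b c : α} {M : Multiset α} (h : a ::ₘ {b} = M + {c}) :
    (c = b ∧ M = {a}) ∨ (c = a ∧ M = {b}) := by
  have hm : c ∈ a ::ₘ ({b} : Multiset α) := by rw [h]; simp
  rw [add_comm, Multiset.singleton_add] at h
  rcases Multiset.mem_cons.1 hm with rfl | hm
  · rw [Multiset.cons_inj_right] at h
    exact Or.inr ⟨rfl, h.symm⟩
  · have hm := Multiset.mem_singleton.1 hm
    subst hm
    rw [pc, Multiset.cons_inj_right] at h
    exact Or.inl ⟨rfl, h.symm⟩

theorem isB_of_tensor {s : Sg} (h : ∃ A B, s.1 = .tensor A B) : ¬ isB s.1 := by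
  obtain ⟨A, B, h⟩ := h
  rw [h]; exact fun h => h

/-- The two forwarders when the first component of the principal formula is a tensor. -/
theorem two_fw {A B : Form} {a : Obs A} {b : Obs B} {γ δ : St} {so sY : Sg}
    (hso : ∃ A B, so.1 = .tensor A B) (hsY : ∃ A B, sY.1 = .parr A B)
    (hA : ∃ C D, A = .tensor C D)
    (hl : so ::ₘ {sY} = γ.1 + δ.1) (h1 : FW (emb A a + γ)) (h2 : FW (emb B b + δ)) :
    (⟨A, a⟩ : Sg) = dsig sY ∧ (⟨B, b⟩ : Sg) = dsig so ∧ γ.2 = 0 ∧ δ.2 = 0 := by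
  obtain ⟨C, D, rfl⟩ := hA
  rw [emb_nq nqTensor] at h1
  have hγ := fw_lin (s := ⟨C.tensor D, a⟩) (fun h => h) h1
  subst hγ
  rw [add_comm] at hl
  simp only at hl
  have hd : dsig ⟨C.tensor D, a⟩ = sY ∧ δ.1 = {so} := by
    rcases pair_split hl with h | h
    · exact h
    · exfalso
      obtain ⟨A, B, hso⟩ := hso
      rw [← h.1] at hso
      simp [dsig, Form.dual] at hso
  obtain ⟨rfl, hd⟩ := hd
  have e : emb B b + δ = (({so} : Multiset Sg), (0 : Multiset Sg)) + (emb B b + (0, δ.2)) := by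
    refine Prod.ext ?_ ?_
    · simp [hd, add_comm]
    · simp
  rw [e] at h2
  have h3 := fw_lin (isB_of_tensor hso) h2
  refine ⟨(dsig_dsig _).symm, ?_, rfl, ?_⟩
  · have := congrArg Prod.fst h3
    simp only [Prod.fst_add, add_zero] at this
    rcases emb_lin_cases B b with ⟨_, h⟩ | ⟨B', m, _, h⟩
    · rw [h] at this
      exact Multiset.singleton_inj.1 this
    · rw [h] at this
      exact absurd this.symm (Multiset.singleton_ne_zero _)
  · have := congrArg Prod.snd h3
    simp only [Prod.snd_add] at this
    exact (add_eq_zero.1 this).2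

theorem bodyG_ns {m v₀ v c a' u : Name} {P Y₁ Y₂ D : Form} {y : Obs (.parr Y₁ Y₂)} {q : Multiset Sg}
    (hq : ∀ s ∈ q, s.1 = .tensor P .bot ∨ s.1 = D)
    (hD : (∃ s ∈ q, s.1 = D) → ∃ A B, D = .tensor A B ∧
      ((∃ C D', A = .tensor C D') ∨ ∃ C D', B = .tensor C D'))
    (h : NS (bodyG m v₀ v c a' u) (emb (.parr Y₁ Y₂) y + (0, q))) :
    ((∃ s ∈ q, s.1 = D) ∧ D = .tensor (Form.parr Y₁ Y₂).dual (Form.tensor P .bot).dual) ∨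
    (D = .tensor (Form.tensor P .bot).dual (Form.parr Y₁ Y₂).dual ∧
      ∃ p : Obs (.tensor P .bot), q = ⟨.tensor P .bot, p⟩ ::ₘ
      {⟨.tensor (Form.tensor P .bot).dual (Form.parr Y₁ Y₂).dual,
        (dualObs (.tensor P .bot) p, dualObs (.parr Y₁ Y₂) y)⟩}) := by
  obtain ⟨C₁, c₁, γ₁, ⟨C₂, c₂, γ₂, ⟨A, B, a, b, γ, δ, hγ, hδ, h3⟩, h2⟩, h1⟩ := h
  have ht : ∀ s ∈ q, ∃ A B, s.1 = .tensor A B := by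
    intro s hs
    rcases hq s hs with h | h
    · exact ⟨_, _, h⟩
    · obtain ⟨A, B, h', _⟩ := hD ⟨s, hs, h⟩
      exact ⟨A, B, h.trans h'⟩
  rw [emb_nq nqParr, emb_quest] at h1
  have hf1 := congrArg Prod.fst h1
  have hs1 := congrArg Prod.snd h1
  simp only [Prod.fst_add, Prod.snd_add, zero_add, add_zero, Multiset.map_singleton,
    Multiset.singleton_add] at hf1 hs1
  have t1 := ht ⟨C₁, c₁⟩ (by rw [hs1]; simp)
  have n1 : ¬ isQ C₁ := by
    obtain ⟨_, _, h⟩ := t1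
    change C₁ = _ at h
    rw [h]; exact nqTensor
  rw [emb_nq n1, emb_quest] at h2
  have hf2 := congrArg Prod.fst h2
  have hs2 := congrArg Prod.snd h2
  simp only [Prod.fst_add, Prod.snd_add, zero_add, Multiset.map_singleton,
    Multiset.singleton_add] at hf2 hs2
  have t2 := ht ⟨C₂, c₂⟩ (by rw [hs1, hs2]; simp)
  have n2 : ¬ isQ C₂ := by
    obtain ⟨_, _, h⟩ := t2
    change C₂ = _ at h
    rw [h]; exact nqTensor
  rw [emb_nq n2, emb_nq nqTensor] at h3
  have hf3 := congrArg Prod.fst h3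
  have hs3 := congrArg Prod.snd h3
  simp only [Prod.fst_add, Prod.snd_add, zero_add, Multiset.singleton_add] at hf3 hs3
  rw [← hf2, ← hf1] at hf3
  rw [hs2, hs3] at hs1
  -- find the other formula
  obtain ⟨so, hso1, hso2⟩ : ∃ so : Sg, q = ⟨.tensor A B, (a, b)⟩ ::ₘ so ::ₘ (γ.2 + δ.2) ∧
      so ::ₘ {⟨.parr Y₁ Y₂, y⟩} = γ.1 + δ.1 := by
    have hm : (⟨.tensor A B, (a, b)⟩ : Sg) ∈
      (⟨C₂, c₂⟩ : Sg) ::ₘ ⟨C₁, c₁⟩ ::ₘ {⟨.parr Y₁ Y₂, y⟩} := by rw [hf3]; simp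
    rcases Multiset.mem_cons.1 hm with hm | hm
    · rw [← hm] at hf3 hs1
      refine ⟨⟨C₁, c₁⟩, ?_, ?_⟩
      · rw [hs1, Multiset.cons_swap]
      · rwa [Multiset.cons_inj_right] at hf3
    rcases Multiset.mem_cons.1 hm with hm | hm
    · rw [← hm] at hf3 hs1
      refine ⟨⟨C₂, c₂⟩, hs1, ?_⟩
      rwa [Multiset.cons_swap, Multiset.cons_inj_right] at hf3
    · have := congrArg Sigma.fst (Multiset.mem_singleton.1 hm)
      simp at this
  have htso := ht so (by rw [hso1]; simp)
  have hqso := hq so (by rw [hso1]; simp)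
  have hsY : ∃ A B, (⟨.parr Y₁ Y₂, y⟩ : Sg).1 = .parr A B := ⟨_, _, rfl⟩
  rcases hq ⟨.tensor A B, (a, b)⟩ (by rw [hso1]; simp) with hp | hp
  · -- principal `P ⊗ ⊥`: impossible
    exfalso
    simp only [Form.tensor.injEq] at hp
    obtain ⟨rfl, rfl⟩ := hp
    have : FW (emb .bot b + δ) := hδ
    rw [emb_nq nqBot] at this
    have := fw_lin (s := ⟨.bot, b⟩) (fun h => h) this
    rw [this] at hso2
    rcases pair_split hso2 with h | h
    · have := congrArg Sigma.fst h.1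
      simp [dsig, Form.dual] at this
    · obtain ⟨_, _, h'⟩ := htso
      rw [← h.1] at h'
      simp [dsig, Form.dual] at h'
  · change Form.tensor A B = D at hp
    have hDq : ∃ s ∈ q, s.1 = D := ⟨⟨.tensor A B, (a, b)⟩, by rw [hso1]; simp, hp⟩
    obtain ⟨A', B', e, hAB⟩ := hD hDq
    rw [← hp] at e
    simp only [Form.tensor.injEq] at e
    obtain ⟨rfl, rfl⟩ := e
    rcases hAB with hA | hB
    · left
      obtain ⟨e1, e2, -, -⟩ := two_fw htso hsY hA hso2 hγ hδ
      refine ⟨hDq, ?_⟩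
      have e1' : A = _ := congrArg Sigma.fst e1
      have e2' : B = so.1.dual := congrArg Sigma.fst e2
      rcases hqso with h | h
      · rw [← hp, e1', e2', h]; rfl
      · exfalso
        have := congrArg Form.size e2'
        rw [size_dual, h, ← hp] at this
        simp only [Form.size] at this
        omega
    · right
      rw [add_comm] at hso2
      obtain ⟨e1, e2, g1, g2⟩ := two_fw htso hsY hB hso2 hδ hγ
      have e1' : B = _ := congrArg Sigma.fst e1
      have e2' : A = so.1.dual := congrArg Sigma.fst e2
      rcases hqso with h | h
      · obtain ⟨F, p⟩ := so
        change F = _ at h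
        subst h
        cases e1
        cases e2
        refine ⟨hp.symm, p, ?_⟩
        rw [hso1, g1, g2, Multiset.cons_swap]
        rfl
      · exfalso
        have := congrArg Form.size e2'
        rw [size_dual, h, ← hp] at this
        simp only [Form.size] at this
        omega

theorem sep {X D : Form} (hne : X ≠ D) {α α' : Multiset (Obs X)} {β β' : Multiset (Obs D)}
    (h : α.map (fun b => (⟨X, b⟩ : Sg)) + β.map (fun b => (⟨D, b⟩ : Sg)) =
      α'.map (fun b => (⟨X, b⟩ : Sg)) + β'.map (fun b => (⟨D, b⟩ : Sg))) : α = α' ∧ β = β' := by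
  classical
  have inj : ∀ Z : Form, Function.Injective (fun b : Obs Z => (⟨Z, b⟩ : Sg)) := by
    intro Z a b h
    simpa using h
  have f1 : ∀ (Z : Form) (μ : Multiset (Obs Z)),
      Multiset.filter (fun s : Sg => s.1 = Z) (μ.map (fun b => (⟨Z, b⟩ : Sg))) =
      μ.map (fun b => (⟨Z, b⟩ : Sg)) := by
    intro Z μ
    rw [Multiset.filter_eq_self]
    intro s hs
    obtain ⟨b, _, rfl⟩ := Multiset.mem_map.1 hs
    rfl
  have f2 : ∀ (Z Z' : Form) (μ : Multiset (Obs Z)), Z ≠ Z' →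
      Multiset.filter (fun s : Sg => s.1 = Z') (μ.map (fun b => (⟨Z, b⟩ : Sg))) = 0 := by
    intro Z Z' μ hne
    rw [Multiset.filter_eq_nil]
    intro s hs
    obtain ⟨b, _, rfl⟩ := Multiset.mem_map.1 hs
    exact hne
  have h1 := congrArg (Multiset.filter (fun s : Sg => s.1 = X)) h
  have h2 := congrArg (Multiset.filter (fun s : Sg => s.1 = D)) h
  simp only [Multiset.filter_add, f1, f2 _ _ _ hne, f2 _ _ _ hne.symm, add_zero, zero_add] at h1 h2
  exact ⟨Multiset.map_injective (inj X) h1, Multiset.map_injective (inj D) h2⟩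

theorem runs_sum {X Y D : Form} {f : Obs X × Obs Y → Obs D} (runs : List (Obs Y × Multiset Sg))
    (h : ∀ r ∈ runs, ∃ p : Obs X, r.2 = ⟨X, p⟩ ::ₘ {⟨D, f (p, r.1)⟩}) :
    ∃ es : Multiset (Obs X × Obs Y), (↑(runs.map Prod.fst) : Multiset (Obs Y)) = es.map Prod.snd ∧
      (runs.map Prod.snd).sum = (es.map Prod.fst).map (fun b => (⟨X, b⟩ : Sg)) +
        (es.map f).map (fun b => (⟨D, b⟩ : Sg)) := by
  induction runs with
  | nil => exact ⟨0, rfl, rfl⟩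
  | cons r runs ih =>
    obtain ⟨es, e1, e2⟩ := ih (fun r hr => h r (List.mem_cons_of_mem _ hr))
    obtain ⟨p, hp⟩ := h r List.mem_cons_self
    refine ⟨(p, r.1) ::ₘ es, ?_, ?_⟩
    · simp only [List.map_cons, ← Multiset.cons_coe, e1, Multiset.map_cons]
    · simp only [List.map_cons, List.sum_cons, e2, hp, Multiset.map_cons]
      simp only [← Multiset.singleton_add]
      abel



/-! ### The exponential case: soundness -/

theorem split_cases {α : Type} {a b : α} {M N : Multiset α} (h : a ::ₘ {b} = M + N) (ha : a ∉ M) :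
    (M = 0 ∧ N = a ::ₘ {b}) ∨ (M = {b} ∧ N = {a}) := by
  have hm : a ∈ M + N := by rw [← h]; simp
  obtain ⟨N', rfl⟩ := Multiset.exists_cons_of_mem ((Multiset.mem_add.1 hm).resolve_left ha)
  rw [Multiset.add_cons, Multiset.cons_inj_right] at h
  have hb : b ∈ M + N' := by rw [← h]; simp
  rcases Multiset.mem_add.1 hb with hb | hb
  · obtain ⟨M', rfl⟩ := Multiset.exists_cons_of_mem hb
    rw [Multiset.cons_add] at h
    have h0 := ((Multiset.singleton_eq_cons_iff _).1 h).2
    obtain ⟨rfl, rfl⟩ := add_eq_zero.1 h0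
    exact Or.inr ⟨rfl, rfl⟩
  · obtain ⟨M', rfl⟩ := Multiset.exists_cons_of_mem hb
    rw [Multiset.add_cons] at h
    have h0 := ((Multiset.singleton_eq_cons_iff _).1 h).2
    obtain ⟨rfl, rfl⟩ := add_eq_zero.1 h0
    exact Or.inl ⟨rfl, rfl⟩

theorem fg_lin_mem {M : Multiset Entry} {x : Name} {A : Form} {a : Obs A} (hA : ¬ isQ A)
    (h : ent x A a ∈ M) : (⟨A, a⟩ : Sg) ∈ (fg M).1 := by
  obtain ⟨M', rfl⟩ := Multiset.exists_cons_of_mem h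
  rw [fg_cons, emb_nq hA]
  simp

/-- The package body cannot be typed with swapped components. -/
theorem bodyP_swap {m' a b t r : ℕ} {S : Proc} (h1 : m' ≠ a) {Y₁ Y₂ P Q : Form} {e}
    (h : DenM (bodyP m' a b t r S) {ent m' (.parr (.parr Y₁ Y₂) (.tensor P Q)) e}) : False := by
  have h := (inp_iff (M := 0) Fr.zero NoQ.zero).1 h
  obtain ⟨A, B, a', b', M', hM, -⟩ := h.inv (NoQ.cons nqParr (NoQ.single nqTensor))
  have e1 : ∀ E : Entry, E ::ₘ 0 = {E} := fun _ => rfl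
  rw [e1, pc] at hM
  obtain ⟨h2, -⟩ := resolve hM.symm (Fr.single (by omega))
  cases h2

/-- Case analysis of the cut. -/
theorem bang_cut {m m' : Name} {B : Proc} {A Y : Form} {a0 : Obs A} {x y : Name}
    {Z : Form} {α : Obs (.parr Z .one)} {ω : Obs (.bang Y)} {M₁ M₂ : Multiset Entry}
    (hM : ent x (.parr Z .one) α ::ₘ {ent y (.bang Y) ω} = M₁ + M₂)
    (h : NS (.server m m' B) (emb A a0 + fg M₁))
    (hY : ∀ e q, ¬ NS B (emb Y e + (0, q))) :
    (M₁ = 0 ∧ M₂ = ent x (.parr Z .one) α ::ₘ {ent y (.bang Y) ω} ∧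
      ∃ E' ρ, (⟨A, a0⟩ : Sg) = ⟨.bang E', ρ⟩ ∧ ∀ e ∈ ρ, ∃ q, NS B (emb E' e + (0, q))) ∨
    (M₂ = {ent x (.parr Z .one) α} ∧ ω = 0 ∧ ∃ A', (⟨A, a0⟩ : Sg) = ⟨.quest A', (0 : Multiset (Obs A'))⟩) := by
  obtain ⟨E', runs, hr, h⟩ := h
  rw [emb_nq nqBang] at h
  have hf := congrArg Prod.fst h
  have hs := congrArg Prod.snd h
  simp only [Prod.fst_add, Prod.snd_add, add_zero, zero_add] at hf hs
  have hx : ent x (.parr Z .one) α ∉ M₁ := by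
    intro hx
    have := fg_lin_mem nqParr hx
    have h2 : (⟨.parr Z .one, α⟩ : Sg) ∈ ({⟨.bang E', (↑(runs.map Prod.fst) : Multiset (Obs E'))⟩} : Multiset Sg) := by
      rw [← hf]; exact Multiset.mem_add.2 (Or.inr this)
    have := congrArg Sigma.fst (Multiset.mem_singleton.1 h2)
    simp at this
  rcases split_cases hM hx with ⟨rfl, rfl⟩ | ⟨rfl, rfl⟩
  · left
    refine ⟨rfl, rfl, E', (↑(runs.map Prod.fst) : Multiset (Obs E')), ?_, ?_⟩
    · rcases emb_lin_cases A a0 with ⟨_, he⟩ | ⟨B, m, _, he⟩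
      · rw [he] at hf
        simpa using hf
      · rw [he] at hf
        simp at hf
    · intro e he
      obtain ⟨r, hr', rfl⟩ := List.mem_map.1 (Multiset.mem_coe.1 he)
      exact ⟨_, hr r hr'⟩
  · right
    rw [fg_single, emb_nq nqBang] at hf hs
    rcases emb_lin_cases A a0 with ⟨_, he⟩ | ⟨B', μ, he1, he⟩
    · rw [he] at hf
      have := congrArg Multiset.card hf
      simp at this
    · rw [he] at hf hs
      simp only [zero_add, add_zero, Multiset.singleton_inj] at hf hs
      cases hf
      have h0 : runs = [] := by
        cases runs with
        | nil => rfl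
        | cons r rs => exact absurd (hr r List.mem_cons_self) (hY _ _)
      subst h0
      simp only [List.map_nil, List.sum_nil, Multiset.map_eq_zero] at hs
      subst hs
      exact ⟨rfl, rfl, B', he1⟩

theorem dual_inj {A B : Form} (h : A.dual = B.dual) : A = B := by
  rw [← dual_dual A, h, dual_dual]

section
variable {P W : Form} {R : Obs P → Obs W → Prop}

theorem bang_sound {x y m m' a b t r v₀ v c a' u : ℕ} {S : Proc}
    (h1 : m' ≠ a) (h2 : m' ≠ b) (h3 : a ≠ b) (h4 : a ≠ t)
    (nW : ¬ isQ W) (h : ∀ p w, DenM S {ent r P p, ent t W w} ↔ R p w)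
    {α : Multiset (Obs (.tensor P .bot))} {un : Unit} {ω : Multiset (Obs (.parr (.tensor W .bot) .one))}
    (hd : DenM (.cut m (.server m m' (bodyP m' a b t r S)) (dispF x y m v₀ v c a' u))
      (ent x (.parr (.quest (.tensor P .bot)) .one) (α, un) ::ₘ
        {ent y (.bang (.parr (.tensor W .bot) .one)) ω})) :
    ∃ es : Multiset (Obs (.tensor P .bot) × Obs (.parr (.tensor W .bot) .one)),
      (∀ e ∈ es, R e.1.1 e.2.1.1) ∧ α = es.map Prod.fst ∧ ω = es.map Prod.snd := by
  obtain ⟨A, a0, M₁, M₂, hM, d1, d2⟩ := hd.inv (NoQ.cons nqParr (NoQ.single nqBang))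
  have n1 := d1.ns
  rw [fg_cons] at n1
  rcases bang_cut hM n1 (by
      intro e q hn
      obtain ⟨A₁, B₁, e1, e2⟩ := bodyP_ns hn
      simp only [Form.parr.injEq] at e1
      obtain ⟨rfl, rfl⟩ := e1
      rcases e2 with ⟨_, _, e2⟩ | ⟨_, _, e2⟩ <;> simp at e2) with
    ⟨rfl, rfl, E', ρ, hA, -⟩ | ⟨rfl, rfl, A', hA⟩
  · cases hA
    obtain ⟨E'', m0, hm0, hB⟩ := d1.inv (NoQ.single nqBang)
    have hm1 := Multiset.singleton_inj.1 hm0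
    have hm2 : (⟨.bang E', ρ⟩ : Sg) = ⟨.bang E'', m0⟩ := congrArg Prod.snd hm1
    cases hm2
    have n2 := d2.ns
    have e0 : fg (ent m (Form.bang E').dual (dualObs (.bang E') ρ) ::ₘ
        ent x (.parr (.quest (.tensor P .bot)) .one) (α, un) ::ₘ
        {ent y (.bang (.parr (.tensor W .bot) .one)) ω}) =
        emb (.parr (.quest (.tensor P .bot)) .one) (α, un) +
          (emb (.bang (.parr (.tensor W .bot) .one)) ω +
            (0, (ρ.map (dualObs E')).map (fun b => (⟨E'.dual, b⟩ : Sg)))) := by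
      rw [fg_cons, fg_cons, fg_single]
      have : emb (Form.bang E').dual (dualObs (.bang E') ρ) =
        (0, (ρ.map (dualObs E')).map (fun b => (⟨E'.dual, b⟩ : Sg))) := rfl
      rw [this]
      abel
    rw [e0] at n2
    obtain ⟨runs, hr, hω, hsum⟩ := dispF_ns n2
    have hsub : ∀ r ∈ runs, ∀ s ∈ r.2, s ∈ (runs.map Prod.snd).sum := by
      intro r hr s hs
      rw [List.mem_iff_append] at hr
      obtain ⟨l1, l2, rfl⟩ := hr
      simp only [List.map_append, List.map_cons, List.sum_append, List.sum_cons, Multiset.mem_add]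
      exact Or.inr (Or.inl hs)
    have hty : ∀ r ∈ runs, ∀ s ∈ r.2, s.1 = .tensor P .bot ∨ (s.1 = E'.dual ∧ ρ ≠ 0) := by
      intro r hr s hs
      have := hsub r hr s hs
      rw [← hsum] at this
      rcases Multiset.mem_add.1 this with hs | hs
      · obtain ⟨b, _, rfl⟩ := Multiset.mem_map.1 hs
        exact Or.inl rfl
      · obtain ⟨b, hb, rfl⟩ := Multiset.mem_map.1 hs
        refine Or.inr ⟨rfl, ?_⟩
        rintro rfl
        simp at hb
    have hnil : runs = [] → ∃ es : Multiset (Obs (.tensor P .bot) × Obs (.parr (.tensor W .bot) .one)),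
      (∀ e ∈ es, R e.1.1 e.2.1.1) ∧ α = es.map Prod.fst ∧ ω = es.map Prod.snd := by
      rintro rfl
      rw [List.map_nil, List.sum_nil, add_eq_zero, Multiset.map_eq_zero] at hsum
      exact ⟨0, by simp, hsum.1, hω⟩
    by_cases hρ : ρ = 0
    · apply hnil
      apply List.eq_nil_iff_forall_not_mem.2
      intro r hrr
      have := bodyG_ns (D := .one) (q := r.2) (by
          intro s hs
          rcases hty r hrr s hs with h | h
          · exact Or.inl h
          · exact absurd hρ h.2) (by
          rintro ⟨s, hs, h1⟩
          rcases hty r hrr s hs with h | h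
          · rw [h] at h1; simp at h1
          · exact absurd hρ h.2) (hr r hrr)
      rcases this with h | h
      · simp at h
      · simp at h
    · obtain ⟨e, he⟩ := Multiset.exists_mem_of_ne_zero hρ
      have hE : ∃ A₁ B₁, E' = .parr A₁ B₁ ∧
          ((∃ C D, A₁ = .parr C D) ∨ (∃ C D, B₁ = .parr C D)) := by
        have := (hB e he).ns
        rw [fg_single] at this
        have hz : emb E' e = emb E' e + (0, 0) := by rw [← Prod.zero_eq_mk, add_zero]
        rw [hz] at this
        exact bodyP_ns this
      have hG := fun r (hrr : r ∈ runs) => bodyG_ns (D := E'.dual) (q := r.2) (by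
          intro s hs
          rcases hty r hrr s hs with h | h
          · exact Or.inl h
          · exact Or.inr h.1) (by
          rintro -
          obtain ⟨A₁, B₁, e1, e2⟩ := hE
          refine ⟨A₁.dual, B₁.dual, by rw [e1]; rfl, ?_⟩
          rcases e2 with ⟨C, D, rfl⟩ | ⟨C, D, rfl⟩
          · exact Or.inl ⟨_, _, rfl⟩
          · exact Or.inr ⟨_, _, rfl⟩) (hr r hrr)
      have hG2 : ∀ r ∈ runs, E'.dual = .tensor (Form.tensor P .bot).dual
            (Form.parr (.tensor W .bot) .one).dual ∧
          ∃ p : Obs (.tensor P .bot), r.2 = ⟨.tensor P .bot, p⟩ ::ₘ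
          {⟨.tensor (Form.tensor P .bot).dual (Form.parr (.tensor W .bot) .one).dual,
            (dualObs (.tensor P .bot) p, dualObs (.parr (.tensor W .bot) .one) r.1)⟩} := by
        intro r hrr
        refine (hG r hrr).resolve_left ?_
        rintro ⟨-, h0⟩
        have h0 : E' = .parr (.parr (.tensor W .bot) .one) (.tensor P .bot) := dual_inj h0
        subst h0
        exact bodyP_swap h1 (hB e he)
      by_cases hrn : runs = []
      · exact hnil hrn
      obtain ⟨r0, hr0⟩ := List.exists_mem_of_ne_nil _ hrn
      have hE2 : E' = .parr (.tensor P .bot) (.parr (.tensor W .bot) .one) :=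
        dual_inj (hG2 r0 hr0).1
      subst hE2
      obtain ⟨es, k1, k2⟩ := runs_sum (X := .tensor P .bot) (Y := .parr (.tensor W .bot) .one)
        (D := (Form.parr (.tensor P .bot) (.parr (.tensor W .bot) .one)).dual)
        (f := fun e => dualObs (.parr (.tensor P .bot) (.parr (.tensor W .bot) .one)) e)
        runs (fun r hrr => (hG2 r hrr).2)
      rw [k2] at hsum
      obtain ⟨l1, l2⟩ := sep (by
        intro h0
        have := congrArg Form.size h0
        rw [size_dual] at this
        simp only [Form.size] at this
        omega) hsum
      have l3 : ρ = es := Multiset.map_injective (dualObs _).injective l2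
      refine ⟨es, ?_, l1, hω.trans k1⟩
      intro e he
      rw [← l3] at he
      exact (bodyP_den h1 h2 h3 h4 nW h e).1 (hB e he)
  · cases hA
    have n2 := d2.ns
    have e0 : fg (ent m (Form.quest A').dual (dualObs (.quest A') (0 : Multiset (Obs A'))) ::ₘ
        {ent x (.parr (.quest (.tensor P .bot)) .one) (α, un)}) =
        emb (.parr (.quest (.tensor P .bot)) .one) (α, un) +
          (emb (.bang A'.dual) (0 : Multiset (Obs A'.dual)) + (0, 0)) := by
      rw [fg_cons, fg_single]
      have : emb (Form.quest A').dual (dualObs (.quest A') (0 : Multiset (Obs A'))) =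
        emb (.bang A'.dual) (0 : Multiset (Obs A'.dual)) := rfl
      rw [this, ← Prod.zero_eq_mk]
      abel
    rw [e0] at n2
    obtain ⟨runs, hr, hω, hsum⟩ := dispF_ns n2
    have h0 : runs = [] := by
      simpa using hω.symm
    subst h0
    rw [List.map_nil, List.sum_nil, add_eq_zero, Multiset.map_eq_zero] at hsum
    exact ⟨0, by simp, hsum.1, rfl⟩

theorem real_bang (h : Real P W R) (nW : ¬ isQ W) :
    Real (.parr (.quest (.tensor P .bot)) .one) (.bang (.parr (.tensor W .bot) .one))
      (fun p w => ∃ l : Multiset (Obs P × Obs W), (∀ e ∈ l, R e.1 e.2) ∧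
        p.1 = l.map (fun e => (e.1, ())) ∧ w = l.map (fun e => ((e.2, ()), ()))) := by
  intro x y hxy
  obtain ⟨m, hm⟩ : ∃ k : ℕ, k = x + y + 1 := ⟨_, rfl⟩
  obtain ⟨m', hm'⟩ : ∃ k : ℕ, k = x + y + 2 := ⟨_, rfl⟩
  obtain ⟨a, ha⟩ : ∃ k : ℕ, k = x + y + 3 := ⟨_, rfl⟩
  obtain ⟨b, hb⟩ : ∃ k : ℕ, k = x + y + 4 := ⟨_, rfl⟩
  obtain ⟨t, ht⟩ : ∃ k : ℕ, k = x + y + 5 := ⟨_, rfl⟩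
  obtain ⟨r, hr⟩ : ∃ k : ℕ, k = x + y + 6 := ⟨_, rfl⟩
  obtain ⟨S, s1, s2⟩ := h r t (by omega)
  have hty := bodyP_ty (m' := m') (a := a) (b := b) s1
  refine ⟨.cut m (.server m m' (bodyP m' a b t r S))
    (dispF x y m (x + y + 7) (x + y + 8) (x + y + 9) (x + y + 10) (x + y + 11)), ?_, ?_⟩
  · have ht' : Types (bodyP m' a b t r S) ((m', _) :: QCtx []) := tyM_iff.1 hty
    have h1 := tyM_iff.2 (Types.server (Θ := []) m m' ht')
    have h2 := TyM.cut (M := 0) h1 (dispF_ty (x := x) (y := y) (v₀ := x + y + 7) (v := x + y + 8)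
      (c := x + y + 9) (a' := x + y + 10) (u := x + y + 11))
    rw [Multiset.zero_add] at h2
    exact h2
  · rintro ⟨α, un⟩ ω
    constructor
    · intro hd
      obtain ⟨es, e1, e2, e3⟩ := bang_sound (by omega) (by omega) (by omega) (by omega) nW s2 hd
      refine ⟨es.map (fun e => (e.1.1, e.2.1.1)), ?_, ?_, ?_⟩
      · intro e he
        obtain ⟨e', he', rfl⟩ := Multiset.mem_map.1 he
        exact e1 e' he'
      · rw [Multiset.map_map]; exact e2
      · rw [Multiset.map_map]; exact e3
    · rintro ⟨l, hl, e1, e2⟩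
      change α = _ at e1
      subst e1 e2
      induction l using Quotient.inductionOn with
      | h L =>
      have h1 := pack_den (m := m) hty (L.map fun e => ((e.1, ()), ((e.2, ()), ()))) (by
        intro e he
        obtain ⟨e', he', rfl⟩ := List.mem_map.1 he
        exact (bodyP_den (by omega) (by omega) (by omega) (by omega) nW s2 _).2
          (hl e' (Multiset.mem_coe.2 he')))
      have h2 := dispF_den (x := x) (y := y) (m := m) (v₀ := x + y + 7) (v := x + y + 8) (c := x + y + 9)
        (a' := x + y + 10) (u := x + y + 11) (X := .tensor P .bot) (Y := .parr (.tensor W .bot) .one)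
        (L.map fun e => ((e.1, ()), ((e.2, ()), ()))) un
      have h3 := DenM.cut (M := 0) _ h1 h2
      rw [Multiset.zero_add, List.map_map, List.map_map] at h3
      exact h3

end


/-! ### The main construction -/

theorem nq_trans (A : Form) : ¬ isQ (transL A).dual := by
  cases A <;> exact fun h => h

/-- The synchronization relation of a formula. -/
def SR (A : Form) (p : Obs (transL A).dual) (w : Obs (transL A.dual).dual) : Prop :=
  ∃ a : Obs A, p = dualObs (transL A) (Lmap A a) ∧
    w = dualObs (transL A.dual) (Lmap A.dual (dualObs A a))

theorem ms_lift {A : Form} (l : Multiset (Obs (transL A).dual × Obs (transL A.dual).dual))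
    (h : ∀ e ∈ l, SR A e.1 e.2) : ∃ k : Multiset (Obs A),
      l = k.map (fun a => (dualObs (transL A) (Lmap A a),
        dualObs (transL A.dual) (Lmap A.dual (dualObs A a)))) := by
  induction l using Multiset.induction_on with
  | empty => exact ⟨0, rfl⟩
  | cons e l ih =>
    obtain ⟨k, hk⟩ := ih (fun e he => h e (Multiset.mem_cons_of_mem he))
    obtain ⟨a, h1, h2⟩ := h e (Multiset.mem_cons_self _ _)
    refine ⟨a ::ₘ k, ?_⟩
    rw [Multiset.map_cons, ← hk, ← h1, ← h2]

theorem sync_real (A : Form) : Real (transL A).dual (transL A.dual).dual (SR A) := by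
  induction A with
  | one =>
    refine Real.congr real_one ?_
    intro p w
    exact ⟨fun _ => ⟨(), rfl, rfl⟩, fun _ => trivial⟩
  | bot =>
    refine Real.congr real_one.symm ?_
    intro p w
    exact ⟨fun _ => ⟨(), rfl, rfl⟩, fun _ => trivial⟩
  | tensor A B hA hB =>
    refine Real.congr (real_tensor hA hB (nq_trans _) (nq_trans _)) ?_
    rintro ⟨⟨⟨p1, u1⟩, ⟨p2, u2⟩⟩, u3⟩ ⟨w1, w2⟩
    constructor
    · rintro ⟨⟨a, h1, h2⟩, ⟨b, h3, h4⟩⟩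
      simp only at h1 h2 h3 h4
      subst h1 h2 h3 h4
      exact ⟨(a, b), rfl, rfl⟩
    · rintro ⟨⟨a, b⟩, h1, h2⟩
      cases h1
      cases h2
      exact ⟨⟨a, rfl, rfl⟩, ⟨b, rfl, rfl⟩⟩
  | parr A B hA hB =>
    refine Real.congr (real_tensor hA.symm hB.symm (nq_trans _) (nq_trans _)).symm ?_
    rintro ⟨w1, w2⟩ ⟨⟨⟨p1, u1⟩, ⟨p2, u2⟩⟩, u3⟩
    constructor
    · rintro ⟨⟨a, h1, h2⟩, ⟨b, h3, h4⟩⟩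
      simp only at h1 h2 h3 h4
      subst h1 h2 h3 h4
      exact ⟨(a, b), rfl, rfl⟩
    · rintro ⟨⟨a, b⟩, h1, h2⟩
      cases h1
      cases h2
      exact ⟨⟨a, rfl, rfl⟩, ⟨b, rfl, rfl⟩⟩
  | oplus A B hA hB =>
    refine Real.congr (real_oplus hA hB (nq_trans _) (nq_trans _)) ?_
    rintro ⟨p, u⟩ w
    constructor
    · rintro (⟨⟨p, u⟩, w, h1, rfl, a, h2, h3⟩ | ⟨⟨p, u⟩, w, h1, rfl, a, h2, h3⟩)
      · simp only at h1 h2 h3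
        subst h1 h2 h3
        exact ⟨Sum.inl a, rfl, rfl⟩
      · simp only at h1 h2 h3
        subst h1 h2 h3
        exact ⟨Sum.inr a, rfl, rfl⟩
    · rintro ⟨a | a, h1, h2⟩
      · cases h1
        cases h2
        exact Or.inl ⟨_, _, rfl, rfl, a, rfl, rfl⟩
      · cases h1
        cases h2
        exact Or.inr ⟨_, _, rfl, rfl, a, rfl, rfl⟩
  | wth A B hA hB =>
    refine Real.congr (real_oplus hA.symm hB.symm (nq_trans _) (nq_trans _)).symm ?_
    rintro w ⟨p, u⟩
    constructor
    · rintro (⟨⟨p, u⟩, w, h1, rfl, a, h2, h3⟩ | ⟨⟨p, u⟩, w, h1, rfl, a, h2, h3⟩)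
      · simp only at h1 h2 h3
        subst h1 h2 h3
        exact ⟨Sum.inl a, rfl, rfl⟩
      · simp only at h1 h2 h3
        subst h1 h2 h3
        exact ⟨Sum.inr a, rfl, rfl⟩
    · rintro ⟨a | a, h1, h2⟩
      · cases h1
        cases h2
        exact Or.inl ⟨_, _, rfl, rfl, a, rfl, rfl⟩
      · cases h1
        cases h2
        exact Or.inr ⟨_, _, rfl, rfl, a, rfl, rfl⟩
  | bang A hA =>
    have key : ∀ k : Multiset (Obs A),
        (dualObs (transL (.bang A)) (Lmap (.bang A) k)) =
          (k.map (fun a => (dualObs (transL A) (Lmap A a), ())), ()) ∧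
        dualObs (transL (Form.bang A).dual) (Lmap (Form.bang A).dual (dualObs (.bang A) k)) =
          k.map (fun a => ((dualObs (transL A.dual) (Lmap A.dual (dualObs A a)), ()), ())) := by
      intro k
      constructor
      · refine Prod.ext ?_ rfl
        exact Multiset.map_map _ _ k
      · refine (Multiset.map_map _ _ (Multiset.map (dualObs A) k)).trans ?_
        exact Multiset.map_map _ _ k
    refine Real.congr (real_bang hA (nq_trans _)) ?_
    rintro ⟨p, u⟩ w
    constructor
    · rintro ⟨l, hl, h1, h2⟩
      obtain ⟨k, rfl⟩ := ms_lift l hl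
      rw [Multiset.map_map] at h1 h2
      refine ⟨k, ?_, ?_⟩
      · refine Eq.trans ?_ (key k).1.symm
        exact Prod.ext h1 rfl
      · exact h2.trans (key k).2.symm
    · rintro ⟨k, h1, h2⟩
      refine ⟨k.map (fun a => (dualObs (transL A) (Lmap A a),
        dualObs (transL A.dual) (Lmap A.dual (dualObs A a)))), ?_, ?_, ?_⟩
      · intro e he
        obtain ⟨a, _, rfl⟩ := Multiset.mem_map.1 he
        exact ⟨a, rfl, rfl⟩
      · rw [Multiset.map_map]
        exact congrArg Prod.fst (h1.trans (key k).1)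
      · rw [Multiset.map_map]
        exact h2.trans (key k).2
  | quest A hA =>
    have key : ∀ k : Multiset (Obs A),
        dualObs (transL (.quest A)) (Lmap (.quest A) k) =
          k.map (fun a => ((dualObs (transL A) (Lmap A a), ()), ())) ∧
        dualObs (transL (Form.quest A).dual) (Lmap (Form.quest A).dual (dualObs (.quest A) k)) =
          (k.map (fun a => (dualObs (transL A.dual) (Lmap A.dual (dualObs A a)), ())), ()) := by
      intro k
      constructor
      · exact Multiset.map_map _ _ k
      · refine Prod.ext ?_ rfl
        refine (Multiset.map_map _ _ (Multiset.map (dualObs A) k)).trans ?_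
        exact Multiset.map_map _ _ k
    refine Real.congr (real_bang hA.symm (nq_trans _)).symm ?_
    rintro w ⟨p, u⟩
    constructor
    · rintro ⟨l, hl, h1, h2⟩
      obtain ⟨k, hk⟩ := ms_lift (l.map Prod.swap) (by
        intro e he
        obtain ⟨e', he', rfl⟩ := Multiset.mem_map.1 he
        exact hl e' he')
      have hk' := congrArg (Multiset.map Prod.swap) hk
      rw [Multiset.map_map, Multiset.map_map, Prod.swap_swap_eq, Multiset.map_id] at hk'
      subst hk'
      rw [Multiset.map_map] at h1 h2
      refine ⟨k, ?_, ?_⟩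
      · exact h2.trans (key k).1.symm
      · refine Eq.trans ?_ (key k).2.symm
        exact Prod.ext h1 rfl
    · rintro ⟨k, h1, h2⟩
      refine ⟨k.map (fun a => (dualObs (transL A.dual) (Lmap A.dual (dualObs A a)),
        dualObs (transL A) (Lmap A a))), ?_, ?_, ?_⟩
      · intro e he
        obtain ⟨a, _, rfl⟩ := Multiset.mem_map.1 he
        exact ⟨a, rfl, rfl⟩
      · rw [Multiset.map_map]
        exact congrArg Prod.fst (h2.trans (key k).2)
      · rw [Multiset.map_map]
        exact h1.trans (key k).1

theorem sync_top {P W : Form} {R} (hR : Real P W R) (nP : ¬ isQ P) (nW : ¬ isQ W) (z w s : ℕ)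
    (h1 : z ≠ w) (h2 : z ≠ s) (h3 : w ≠ s) :
    ∃ S : Proc, TyM S ((z, .tensor P .bot) ::ₘ (w, .tensor W .bot) ::ₘ {(s, .one)}) ∧
      ∀ (p : Obs P × Unit) (o : Obs W × Unit) (u : Unit),
        DenM S (ent z (.tensor P .bot) p ::ₘ ent w (.tensor W .bot) o ::ₘ {ent s .one u}) ↔
          R p.1 o.1 := by
  obtain ⟨z', hz'⟩ : ∃ k : ℕ, k = z + w + s + 1 := ⟨_, rfl⟩
  obtain ⟨w', hw'⟩ : ∃ k : ℕ, k = z + w + s + 2 := ⟨_, rfl⟩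
  obtain ⟨S, s1, s2⟩ := hR z' w' (by omega)
  rw [Multiset.insert_eq_cons, pc] at s1
  refine ⟨.out z z' (gad w w' S) (.wait z (.close s)), ?_, ?_⟩
  · have g := TyM.gad (q := w) s1
    rw [pc] at g
    exact TyM.out g (TyM.wait TyM.close)
  · intro p o u
    have hN : NoQ (ent w (.tensor W .bot) o ::ₘ {ent s .one u}) := NoQ.cons nqTensor (NoQ.single nqOne)
    have hF : Fr z (ent w (.tensor W .bot) o ::ₘ {ent s .one u}) :=
      Fr.cons (by omega) (Fr.single (by omega))
    rw [out_iff hF hN, ← s2]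
    constructor
    · rintro ⟨M₁, M₂, hM, g₁, g₂⟩
      rw [hM] at hN hF
      have hN2 : NoQ M₂ := fun e he => hN e (Multiset.mem_add.2 (Or.inr he))
      have hF2 : Fr z M₂ := fun e he => hF e (Multiset.mem_add.2 (Or.inr he))
      rw [wait_iff hF2 hN2] at g₂
      have g₃ : M₂ = {ent s .one ()} := g₂.inv hN2
      obtain ⟨rfl, rfl⟩ := split2 hM (by exact h3) (by
          obtain ⟨e, he, h⟩ := gad_mem (NoQ.cons nP (fun e he => hN e (Multiset.mem_add.2 (Or.inl he)))) g₁
          rcases Multiset.mem_cons.1 he with rfl | he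
          · change (z' : ℕ) = w at h; omega
          · exact ⟨e, he, h⟩) (by
          rw [g₃]
          exact ⟨_, Multiset.mem_singleton_self _, rfl⟩)
      rw [pc] at g₁
      have := (gad_iff (Fr.single (by omega)) (NoQ.single nP)).1 g₁
      rw [pc] at this
      exact this
    · intro h
      refine ⟨{ent w (.tensor W .bot) o}, {ent s .one u}, rfl, ?_, DenM.wait DenM.close⟩
      rw [pc, gad_iff (Fr.single (by omega)) (NoQ.single nP), pc]
      exact h



/-- For every formula `A` and names `z, w, s`, there exists a synchronizer
`Sync^A_{z,w} ⊢ z:(A^⊥L)^⊥⊗⊥, w:((A^⊥)^⊥L)^⊥⊗⊥, s:1` with denotation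
`{ ((L_A a, *), (L_{A^⊥} a, *), *) | a ∈ ⟦A⟧ }`. -/
theorem synchronizer_exists (A : Form) (z w s : Name)
    (h1 : z ≠ w) (h2 : z ≠ s) (h3 : w ≠ s) :
    ∃ S : Proc,
      Types S [(z, .tensor (transL A).dual .bot), (w, .tensor (transL A.dual).dual .bot),
               (s, .one)] ∧
      Sem S [(z, .tensor (transL A).dual .bot), (w, .tensor (transL A.dual).dual .bot),
             (s, .one)] =
        {o | ∃ a : Obs A,
          o = ((dualObs (transL A) (Lmap A a), ()),
               ((dualObs (transL A.dual) (Lmap A.dual (dualObs A a)), ()), ((), ())))} := by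
  obtain ⟨S, t, d⟩ := sync_top (sync_real A) (nq_trans _) (nq_trans _) z w s h1 h2 h3
  refine ⟨S, tyM_iff.1 t, ?_⟩
  ext ⟨⟨p, u1⟩, ⟨o, u2⟩, ⟨u3, u4⟩⟩
  have e : Den S [(z, .tensor (transL A).dual .bot), (w, .tensor (transL A.dual).dual .bot),
      (s, .one)] ((p, u1), ((o, u2), (u3, u4))) ↔ SR A p o := by
    rw [← denM_iff]
    exact d (p, u1) (o, u2) u3
  refine Iff.trans e ?_
  constructor
  · rintro ⟨a, rfl, rfl⟩
    exact ⟨a, rfl⟩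
  · rintro ⟨a, ha⟩
    cases ha
    exact ⟨a, rfl, rfl⟩

end PaS
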